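/- arXiv:2402.07882 — 5 statements merged into one kernel-verified Lean document; each statement's English description precedes it below -/
import Mathlib

section
/- Let e ∈ {1,2} and let r be a positive integer with r ≡ e+1 (mod 2). Let V be an F-vector space of dimension r+3 and Q a nondegenerate quadratic form on V of Witt defect e. Let S be a spread of Q, fix Σ₀ ∈ S, a nonzero vector p ∈ Σ₀, and a subspace H of p^⊥ with dim H = r+1 and p ∉ H. For each Σ ∈ S \ {Σ₀} set Π_Σ = (span{p} + Σ) ∩ H. Then for all distinct Σ, Σ' ∈ S \ {Σ₀}, dim(Π_Σ ∩ Π_{Σ'}) ≤ 1. -/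
open Module Submodule

section Defs

variable {F : Type*} [Field F] {V : Type*} [AddCommGroup V] [Module F V]

/-- A subspace is totally singular if the quadratic form vanishes on it. -/
def IsTotallySingular (Q : QuadraticForm F V) (W : Submodule F V) : Prop :=
  ∀ x ∈ W, Q x = 0

/-- The Witt index: maximal dimension of a totally singular subspace. -/
noncomputable def wittIndex (Q : QuadraticForm F V) : ℕ :=
  sSup {n : ℕ | ∃ W : Submodule F V, IsTotallySingular Q W ∧ Module.finrank F ↥W = n}

/-- Nondegeneracy: the only singular vector orthogonal to everything is `0`. -/
def QuadNondeg (Q : QuadraticForm F V) : Prop :=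
  ∀ v : V, Q v = 0 → (∀ x : V, QuadraticMap.polar Q v x = 0) → v = 0

/-- A generator: totally singular subspace of dimension the Witt index. -/
def IsGenerator (Q : QuadraticForm F V) (G : Submodule F V) : Prop :=
  IsTotallySingular Q G ∧ Module.finrank F ↥G = wittIndex Q

/-- A spread of `Q`. -/
def IsSpread (Q : QuadraticForm F V) (S : Set (Submodule F V)) : Prop :=
  (∀ G ∈ S, IsGenerator Q G) ∧
  (∀ G ∈ S, ∀ G' ∈ S, G ≠ G' → G ⊓ G' = ⊥) ∧
  (∀ v : V, Q v = 0 → ∃ G ∈ S, v ∈ G)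

/-- The perp of a vector with respect to the polar form of `Q`. -/
def vecPerp (Q : QuadraticForm F V) (u : V) : Submodule F V :=
  LinearMap.ker (QuadraticMap.polarBilin Q u)

/-- The perp of a subspace with respect to the polar form of `Q`. -/
def subPerp (Q : QuadraticForm F V) (G : Submodule F V) : Submodule F V :=
  ⨅ g ∈ G, vecPerp Q g

/-- Hyperbolic (e = 0), parabolic (e = 1) or elliptic (e = 2) affine vector space
partition for `(U, H, Q, Pgen)`. -/
def IsAvsp [Fintype F] (e r : ℕ) {U : Type*} [AddCommGroup U] [Module F U]
    (H : Submodule F U) (Q : QuadraticForm F ↥H) (Pgen : Submodule F ↥H)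
    (P : Set (Submodule F U)) : Prop :=
  P.ncard = Fintype.card F ^ ((r + e + 1) / 2) ∧
  (∀ S ∈ P, Module.finrank F ↥S = (r + 3 - e) / 2 ∧ ¬ S ≤ H) ∧
  (∀ L : Submodule F U, Module.finrank F ↥L = 1 → ¬ L ≤ H → ∃! S, S ∈ P ∧ L ≤ S) ∧
  (∀ S ∈ P, IsGenerator Q (S.comap H.subtype) ∧ S.comap H.subtype ⊓ Pgen = ⊥) ∧
  (∀ S ∈ P, ∀ T ∈ P, S ≠ T → S.comap H.subtype ≠ T.comap H.subtype) ∧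
  (∀ S ∈ P, ∀ T ∈ P, S ≠ T → Module.finrank F ↥(S ⊓ T) ≤ 1) ∧
  (∀ S ∈ P, ∀ T ∈ P, S ≠ T →
    Module.finrank F ↥(S.comap H.subtype ⊓ T.comap H.subtype) = 1 →
      QuadNondeg (Q.comp ((S ⊔ T).comap H.subtype).subtype) ∧
      Module.finrank F ↥((S ⊔ T).comap H.subtype) =
        2 * wittIndex (Q.comp ((S ⊔ T).comap H.subtype).subtype))

end Defs

/-- Adjoining a common vector `p` to two subspaces with trivial intersection gives subspaces
meeting in dimension at most two. -/
theorem finrank_span_singleton_sup_inf_le_two {F V : Type*} [Field F] [AddCommGroup V]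
    [Module F V] [FiniteDimensional F V] (p : V) {G G' : Submodule F V} (h : G ⊓ G' = ⊥) :
    finrank F ↥((span F {p} ⊔ G) ⊓ (span F {p} ⊔ G')) ≤ 2 := by
  have hadd := finrank_sup_add_finrank_inf_eq (span F {p} ⊔ G) (span F {p} ⊔ G')
  have hG := finrank_add_le_finrank_add_finrank (span F {p}) G
  have hG' := finrank_add_le_finrank_add_finrank (span F {p}) G'
  have hdisj := finrank_sup_add_finrank_inf_eq G G'
  have hmono : finrank F ↥(G ⊔ G') ≤ finrank F ↥((span F {p} ⊔ G) ⊔ (span F {p} ⊔ G')) :=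
    finrank_mono (sup_le_sup le_sup_right le_sup_right)
  have hp : finrank F ↥(span F {p}) ≤ 1 := by
    simpa using finrank_span_le_card (R := F) {p}
  rw [h, finrank_bot] at hdisj
  omega

theorem lemma_aux_i {F : Type*} [Field F] [Fintype F] (e r : ℕ)
    (he : e = 1 ∨ e = 2) (hr : 0 < r) (hmod : r % 2 = (e + 1) % 2)
    (V : Type*) [AddCommGroup V] [Module F V] [FiniteDimensional F V]
    (hdim : Module.finrank F V = r + 3)
    (Q : QuadraticForm F V) (hQnd : QuadNondeg Q)
    (hdef : Module.finrank F V = 2 * wittIndex Q + e)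
    (S : Set (Submodule F V)) (hS : IsSpread Q S)
    (G₀ : Submodule F V) (hG₀ : G₀ ∈ S)
    (p : V) (hp : p ∈ G₀) (hp0 : p ≠ 0)
    (H : Submodule F V) (hH : H ≤ vecPerp Q p)
    (hHdim : Module.finrank F ↥H = r + 1) (hpH : p ∉ H) :
    ∀ G ∈ S, ∀ G' ∈ S, G ≠ G₀ → G' ≠ G₀ → G ≠ G' →
      Module.finrank F
        ↥(((Submodule.span F {p} ⊔ G) ⊓ H) ⊓ ((Submodule.span F {p} ⊔ G') ⊓ H)) ≤ 1 := by
  intro G hG G' hG' _ _ hne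
  have htwo := finrank_span_singleton_sup_inf_le_two p (hS.2.1 G hG G' hG' hne)
  have hpspan : p ∈ span F {p} := mem_span_singleton_self p
  have hlt : ((span F {p} ⊔ G) ⊓ H) ⊓ ((span F {p} ⊔ G') ⊓ H) <
      (span F {p} ⊔ G) ⊓ (span F {p} ⊔ G') :=
    lt_of_le_of_ne (inf_le_inf inf_le_left inf_le_left) fun heq =>
      hpH (heq.ge ⟨mem_sup_left hpspan, mem_sup_left hpspan⟩).1.2
  have := finrank_lt_finrank_of_lt hlt
  omega
end

section
/- Let r be a positive integer with r ≡ 1 (mod 4). Let V be an F-vector space of dimension r+3 and Q a nondegenerate quadratic form on V of Witt defect 0 (a hyperbolic quadric). Let S be a spread of Q, fix Σ₀ ∈ S, a nonzero vector p ∈ Σ₀, and a subspace H of p^⊥ with dim H = r+1 and p ∉ H. For each Σ ∈ S \ {Σ₀} set Π_Σ = (span{p} + Σ) ∩ H. Then for all distinct Σ, Σ' ∈ S \ {Σ₀}, dim(Π_Σ ∩ Π_{Σ'}) = 1. -/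
open Module Submodule

/-- If `p` is a nonzero singular vector of a nondegenerate quadratic form, then a subspace of `p^⊥`
of codimension two in `V` that avoids `p` spans `p^⊥` together with `p`. -/
theorem sup_span_singleton_eq_vecPerp {F V : Type*} [Field F] [AddCommGroup V] [Module F V]
    [FiniteDimensional F V] {Q : QuadraticForm F V} (hQ : QuadNondeg Q) {p : V} (hp : Q p = 0)
    (hp0 : p ≠ 0) {H : Submodule F V} (hH : H ≤ vecPerp Q p) (hpH : p ∉ H)
    (hdim : finrank F V = finrank F H + 2) :
    H ⊔ span F {p} = vecPerp Q p := by
  have hpp : span F {p} ≤ vecPerp Q p := by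
    rw [span_singleton_le_iff_mem]
    simp [vecPerp, hp]
  have hlt : finrank F (vecPerp Q p) < finrank F V := by
    refine finrank_lt fun h => hp0 (hQ p hp fun x => ?_)
    have hx : x ∈ vecPerp Q p := h ▸ mem_top
    simpa [vecPerp] using hx
  refine eq_of_le_of_finrank_le (sup_le hH hpp) ?_
  have hinf : H ⊓ span F {p} = ⊥ := disjoint_iff.1 ((disjoint_span_singleton' hp0).2 hpH)
  have h := finrank_sup_add_finrank_inf_eq H (span F {p})
  rw [hinf, finrank_bot, finrank_span_singleton hp0] at h
  omega

theorem lemma_aux_ii {F : Type*} [Field F] [Fintype F] (r : ℕ)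
    (hr : 0 < r) (hmod : r % 4 = 1)
    (V : Type*) [AddCommGroup V] [Module F V] [FiniteDimensional F V]
    (hdim : Module.finrank F V = r + 3)
    (Q : QuadraticForm F V) (hQnd : QuadNondeg Q)
    (hdef : Module.finrank F V = 2 * wittIndex Q)
    (S : Set (Submodule F V)) (hS : IsSpread Q S)
    (G₀ : Submodule F V) (hG₀ : G₀ ∈ S)
    (p : V) (hp : p ∈ G₀) (hp0 : p ≠ 0)
    (H : Submodule F V) (hH : H ≤ vecPerp Q p)
    (hHdim : Module.finrank F ↥H = r + 1) (hpH : p ∉ H) :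
    ∀ G ∈ S, ∀ G' ∈ S, G ≠ G₀ → G' ≠ G₀ → G ≠ G' →
      Module.finrank F
        ↥(((Submodule.span F {p} ⊔ G) ⊓ H) ⊓ ((Submodule.span F {p} ⊔ G') ⊓ H)) = 1 := by
  intro G hG G' hG' hGne hG'ne hne
  obtain ⟨hgen, hdisj, -⟩ := hS
  have hQp : Q p = 0 := (hgen G₀ hG₀).1 p hp
  have hnot : ∀ K ∈ S, K ≠ G₀ → p ∉ K := fun K hK hKne hpK =>
    hp0 ((Submodule.mem_bot F).1 (hdisj K hK G₀ hG₀ hKne ▸ mem_inf.2 ⟨hpK, hp⟩))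
  have hinf : G ⊓ G' = ⊥ := hdisj G hG G' hG' hne
  have hzero : ∀ x ∈ G, x ∈ G' → x = 0 := fun x hx hx' =>
    (Submodule.mem_bot F).1 (hinf ▸ mem_inf.2 ⟨hx, hx'⟩)
  have htop : G ⊔ G' = ⊤ := by
    apply eq_top_of_finrank_eq
    have h := finrank_sup_add_finrank_inf_eq G G'
    rw [hinf, finrank_bot, (hgen G hG).2, (hgen G' hG').2] at h
    omega
  obtain ⟨g, hg, g', hg', hgg⟩ := mem_sup.1 (htop ▸ mem_top : p ∈ G ⊔ G')
  -- `B(p, g) = B(g', g) = Q(g + g') = Q(p) = 0`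
  have hperp : g ∈ vecPerp Q p := by
    have h1 : Q (g + g') = 0 := hgg ▸ hQp
    have h2 : Q g = 0 := (hgen G hG).1 g hg
    have h3 : Q g' = 0 := (hgen G' hG').1 g' hg'
    rw [vecPerp, LinearMap.mem_ker, QuadraticMap.polarBilin_apply_apply, ← hgg,
      QuadraticMap.polar_add_left, QuadraticMap.polar_self, QuadraticMap.polar_comm Q g' g,
      QuadraticMap.polar, h1, h2, h3]
    simp
  rw [← sup_span_singleton_eq_vecPerp hQnd hQp hp0 hH hpH (by omega)] at hperp
  obtain ⟨h, hh, y, hy, hhy⟩ := mem_sup.1 hperp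
  obtain ⟨c, rfl⟩ := mem_span_singleton.1 hy
  have hcoef : ∀ a : F, a • p ∈ H → a = 0 := fun a ha => by
    by_contra ha0
    exact hpH ((H.smul_mem_iff ha0).1 ha)
  have hpspan : p ∈ span F {p} := mem_span_singleton_self p
  have hh0 : h ≠ 0 := by
    rintro rfl
    rw [zero_add] at hhy
    by_cases hc : c = 0
    · rw [hc, zero_smul] at hhy
      rw [← hhy, zero_add] at hgg
      exact hnot G' hG' hG'ne (hgg ▸ hg')
    · exact hnot G hG hGne ((G.smul_mem_iff hc).1 (hhy ▸ hg))
  suffices hspan : ((span F {p} ⊔ G) ⊓ H) ⊓ ((span F {p} ⊔ G') ⊓ H) = span F {h} by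
    rw [hspan, finrank_span_singleton hh0]
  apply le_antisymm
  · rintro x ⟨⟨hx, hxH⟩, hx', -⟩
    obtain ⟨y, hy, u, hu, rfl⟩ := mem_sup.1 hx
    obtain ⟨a, rfl⟩ := mem_span_singleton.1 hy
    obtain ⟨y', hy', u', hu', hxu⟩ := mem_sup.1 hx'
    obtain ⟨b, rfl⟩ := mem_span_singleton.1 hy'
    have hug : u = (b - a) • g := by
      refine sub_eq_zero.1 (hzero _ (G.sub_mem hu (G.smul_mem _ hg)) ?_)
      have : u - (b - a) • g = u' + (b - a) • g' := by
        linear_combination (norm := module) -hxu - (b - a) • hgg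
      rw [this]
      exact G'.add_mem hu' (G'.smul_mem _ hg')
    have hdecomp : a • p + u = (a + (b - a) * c) • p + (b - a) • h := by
      rw [hug, ← hhy]
      module
    have hz := hcoef _ ((H.add_mem_iff_left (H.smul_mem (b - a) hh)).1 (hdecomp ▸ hxH))
    rw [hdecomp, hz, zero_smul, zero_add]
    exact smul_mem _ _ (mem_span_singleton_self h)
  · rw [span_singleton_le_iff_mem]
    refine ⟨⟨mem_sup.2 ⟨-c • p, smul_mem _ _ hpspan, g, hg, ?_⟩, hh⟩,
      mem_sup.2 ⟨(1 - c) • p, smul_mem _ _ hpspan, -g', G'.neg_mem hg', ?_⟩, hh⟩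
    · rw [← hhy]
      module
    · linear_combination (norm := module) -hhy - hgg
end

section
/- Let e ∈ {0,1,2} and let r be a positive integer with r ≡ e+1 (mod 2). Let V be an F-vector space of dimension r+3 and Q a nondegenerate quadratic form on V of Witt defect e. Let S be a spread of Q, fix Σ₀ ∈ S, a nonzero vector p ∈ Σ₀, and a subspace H of p^⊥ with dim H = r+1 and p ∉ H. For each Σ ∈ S \ {Σ₀} set Π_Σ = (span{p} + Σ) ∩ H. Then every nonzero singular vector x ∈ H with x ∉ Σ₀ lies in exactly q of the subspaces Π_Σ, i.e., the number of Σ ∈ S \ {Σ₀} with x ∈ Π_Σ equals q. -/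
open Module Submodule

/-- Adding to a singular vector a multiple of a singular vector orthogonal to it gives a singular
vector. -/
theorem singular_add_smul {F V : Type*} [Field F] [AddCommGroup V] [Module F V]
    {Q : QuadraticForm F V} {x p : V} (hx : Q x = 0) (hp : Q p = 0) (hxp : x ∈ vecPerp Q p)
    (c : F) : Q (x + c • p) = 0 := by
  have hB : QuadraticMap.polar Q p x = 0 := hxp
  rw [QuadraticMap.map_add Q, QuadraticMap.map_smul, QuadraticMap.polar_smul_right,
    QuadraticMap.polar_comm, hB, hx, hp]
  simp

theorem lemma_aux_iii {F : Type*} [Field F] [Fintype F] (e r : ℕ)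
    (he : e = 0 ∨ e = 1 ∨ e = 2) (hr : 0 < r) (hmod : r % 2 = (e + 1) % 2)
    (V : Type*) [AddCommGroup V] [Module F V] [FiniteDimensional F V]
    (hdim : Module.finrank F V = r + 3)
    (Q : QuadraticForm F V) (hQnd : QuadNondeg Q)
    (hdef : Module.finrank F V = 2 * wittIndex Q + e)
    (S : Set (Submodule F V)) (hS : IsSpread Q S)
    (G₀ : Submodule F V) (hG₀ : G₀ ∈ S)
    (p : V) (hp : p ∈ G₀) (hp0 : p ≠ 0)
    (H : Submodule F V) (hH : H ≤ vecPerp Q p)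
    (hHdim : Module.finrank F ↥H = r + 1) (hpH : p ∉ H)
    (x : V) (hx0 : x ≠ 0) (hxQ : Q x = 0) (hxH : x ∈ H) (hxG₀ : x ∉ G₀) :
    {G : Submodule F V | G ∈ S ∧ G ≠ G₀ ∧ x ∈ (Submodule.span F {p} ⊔ G) ⊓ H}.ncard =
      Fintype.card F := by
  obtain ⟨hgen, hdisj, hcover⟩ := hS
  have hQline (c : F) : Q (x + c • p) = 0 :=
    singular_add_smul hxQ (hgen G₀ hG₀ |>.1 p hp) (hH hxH) c
  choose f hfS hf using fun c : F => hcover (x + c • p) (hQline c)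
  have hf₀ (c : F) : f c ≠ G₀ := fun h => hxG₀ <|
    (Submodule.add_mem_iff_left _ (G₀.smul_mem c hp)).1 (h ▸ hf c)
  have huniq {G : Submodule F V} (hG : G ∈ S) {c : F} (hc : x + c • p ∈ G) : G = f c := by
    by_contra hne
    have hxc : x + c • p ∈ G ⊓ f c := ⟨hc, hf c⟩
    rw [hdisj G hG _ (hfS c) hne, Submodule.mem_bot] at hxc
    exact hxG₀ (eq_neg_of_add_eq_zero_left hxc ▸ G₀.neg_mem (G₀.smul_mem c hp))
  have hinj : Function.Injective f := by
    intro c d hcd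
    by_contra hne
    have hsub : (c - d) • p ∈ f c := by
      have h := (f c).sub_mem (hf c) (hcd ▸ hf d)
      rwa [add_sub_add_left_eq_sub, ← sub_smul] at h
    have hpf : p ∈ f c ⊓ G₀ :=
      ⟨((f c).smul_mem_iff (sub_ne_zero.2 hne)).1 hsub, hp⟩
    rw [hdisj _ (hfS c) _ hG₀ (hf₀ c), Submodule.mem_bot] at hpf
    exact hp0 hpf
  have hrange : {G : Submodule F V | G ∈ S ∧ G ≠ G₀ ∧ x ∈ (Submodule.span F {p} ⊔ G) ⊓ H} =
      Set.range f := by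
    ext G
    constructor
    · rintro ⟨hG, -, hx, -⟩
      obtain ⟨y, hy, g, hg, hyg⟩ := Submodule.mem_sup.1 hx
      obtain ⟨a, rfl⟩ := Submodule.mem_span_singleton.1 hy
      refine ⟨-a, (huniq hG ?_).symm⟩
      rwa [← hyg, neg_smul, add_comm (a • p), add_neg_cancel_right]
    · rintro ⟨c, rfl⟩
      refine ⟨hfS c, hf₀ c, Submodule.mem_sup.2 ⟨-(c • p), ?_, x + c • p, hf c, ?_⟩, hxH⟩
      · exact Submodule.neg_mem _ (Submodule.smul_mem _ c (Submodule.mem_span_singleton_self p))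
      · abel
  rw [hrange, ← Set.image_univ, Set.ncard_image_of_injective _ hinj, Set.ncard_univ,
    Nat.card_eq_fintype_card]
end

section
/- Let e ∈ {0,1,2} and let r be a positive integer with r ≡ e+1 (mod 2). Suppose there exist an F-vector space U of dimension r+2, a hyperplane H of U, a nondegenerate quadratic form Q on H of Witt defect e, a generator Π of Q, and a hyperbolic, parabolic or elliptic avsp for (U, H, Q, Π) (according as e = 0, 1 or 2). Then there exist an F-vector space V of dimension r+3 and a nondegenerate quadratic form Q' on V of Witt defect e that admits a spread. -/
open Module Submodule

namespace Avsp

section Counting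

variable {F : Type*} [Field F] {V : Type*} [AddCommGroup V] [Module F V]

lemma bddAbove_finrank_isTotallySingular [FiniteDimensional F V] (Q : QuadraticForm F V) :
    BddAbove {n : ℕ | ∃ W : Submodule F V, IsTotallySingular Q W ∧ finrank F ↥W = n} := by
  refine ⟨finrank F V, ?_⟩
  rintro n ⟨W, -, rfl⟩
  exact W.finrank_le

lemma _root_.IsTotallySingular.finrank_le_wittIndex [FiniteDimensional F V] {Q : QuadraticForm F V}
    {W : Submodule F V} (hW : IsTotallySingular Q W) : finrank F ↥W ≤ wittIndex Q :=
  le_csSup (bddAbove_finrank_isTotallySingular Q) ⟨W, hW, rfl⟩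

lemma wittIndex_le {Q : QuadraticForm F V} {n : ℕ}
    (h : ∀ W : Submodule F V, IsTotallySingular Q W → finrank F ↥W ≤ n) : wittIndex Q ≤ n := by
  refine csSup_le ⟨0, ⊥, ?_, by simp⟩ ?_
  · intro x hx
    rw [(Submodule.mem_bot F).1 hx, QuadraticMap.map_zero]
  · rintro m ⟨W, hW, rfl⟩
    exact h W hW

lemma _root_.IsTotallySingular.polar_eq_zero {Q : QuadraticForm F V} {W : Submodule F V}
    (hW : IsTotallySingular Q W) {x y : V} (hx : x ∈ W) (hy : y ∈ W) :
    QuadraticMap.polar Q x y = 0 := by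
  simp [QuadraticMap.polar, hW _ hx, hW _ hy, hW _ (W.add_mem hx hy)]

/-- A singular vector orthogonal to a generator belongs to it. -/
lemma _root_.IsGenerator.mem_of_polar_eq_zero [FiniteDimensional F V] {Q : QuadraticForm F V}
    {G : Submodule F V} (hG : IsGenerator Q G) {v : V} (hv : Q v = 0)
    (hvG : ∀ p ∈ G, QuadraticMap.polar Q v p = 0) : v ∈ G := by
  have hts : IsTotallySingular Q (G ⊔ F ∙ v) := by
    intro x hx
    obtain ⟨p, hp, y, hy, rfl⟩ := Submodule.mem_sup.1 hx
    obtain ⟨c, rfl⟩ := Submodule.mem_span_singleton.1 hy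
    rw [QuadraticMap.map_add Q, hG.1 p hp, QuadraticMap.map_smul, hv,
      QuadraticMap.polar_smul_right, QuadraticMap.polar_comm, hvG p hp]
    simp
  have heq : G = G ⊔ F ∙ v :=
    Submodule.eq_of_le_of_finrank_le le_sup_left (hG.2 ▸ hts.finrank_le_wittIndex)
  rw [heq]
  exact Submodule.mem_sup_right (Submodule.mem_span_singleton_self v)

variable [Fintype F] [FiniteDimensional F V]

open Classical in
/-- A nonzero functional takes every value equally often. -/
lemma card_linear_fiber {n : ℕ} (hV : finrank F V = n + 1) {f : V →ₗ[F] F} (hf : f ≠ 0) (c : F) :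
    Nat.card {x : V // f x = c} = Fintype.card F ^ n := by
  obtain ⟨x₀, hx₀⟩ := LinearMap.surjective hf c
  have hker : finrank F (LinearMap.ker f) = n := by
    have h := f.finrank_range_add_finrank_ker
    rw [LinearMap.range_eq_top.2 (LinearMap.surjective hf), finrank_top, finrank_self, hV] at h
    omega
  have e : {x : V // f x = c} ≃ LinearMap.ker f :=
    (Equiv.addRight (-x₀)).subtypeEquiv fun x => by
      simp [hx₀, ← sub_eq_add_neg, sub_eq_zero]
  rw [Nat.card_congr e, Module.natCard_eq_pow_finrank (K := F), hker, Nat.card_eq_fintype_card]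

/-- Upper bound for the number of singular vectors. -/
lemma card_singular_le {k e : ℕ} {Q : QuadraticForm F V} {G : Submodule F V}
    (hG : IsGenerator Q G) (hk : finrank F ↥G = k + 1) (hV : finrank F V = 2 * (k + 1) + e) :
    Nat.card {v : V // Q v = 0} + Fintype.card F ^ (k + e) ≤
      Fintype.card F ^ (k + 1) + Fintype.card F ^ (2 * k + 1 + e) := by
  classical
  have : Finite V := Module.finite_of_finite F
  have := Fintype.ofFinite V
  set q := Fintype.card F with hq
  have hqpos : 0 < q := Fintype.card_pos
  have cardV : Nat.card V = q ^ (2 * (k + 1) + e) := by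
    rw [Module.natCard_eq_pow_finrank (K := F), hV, Nat.card_eq_fintype_card]
  have cardG : Nat.card G = q ^ (k + 1) := by
    rw [Module.natCard_eq_pow_finrank (K := F), hk, Nat.card_eq_fintype_card]
  let φ : V →ₗ[F] Module.Dual F G := G.subtype.dualMap ∘ₗ QuadraticMap.polarBilin Q
  have hφ : ∀ v (p : G), φ v p = QuadraticMap.polar Q v p := fun v p => rfl
  let K := LinearMap.ker φ
  have cardK : q ^ (k + 1 + e) ≤ Nat.card K := by
    have h := φ.finrank_range_add_finrank_ker
    have h2 := (LinearMap.range φ).finrank_le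
    rw [Subspace.dual_finrank_eq, hk] at h2
    rw [Module.natCard_eq_pow_finrank (K := F) (V := K), Nat.card_eq_fintype_card]
    refine Nat.pow_le_pow_right hqpos ?_
    change k + 1 + e ≤ finrank F (LinearMap.ker φ)
    omega
  have hGK : ∀ v ∈ G, v ∈ K := fun v hv => by
    rw [LinearMap.mem_ker]
    ext p
    exact hG.1.polar_eq_zero hv p.2
  -- number of zeros of `Q` on each coset of `G`
  have hcoset : ∀ v : V, Nat.card {p : G // Q (v + p) = 0} ≤
      (if v ∈ G then q ^ (k + 1) else 0) + (if v ∈ K then 0 else q ^ k) := by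
    intro v
    have hQ : ∀ p : G, Q (v + p) = Q v + φ v p := fun p => by
      rw [hφ, QuadraticMap.map_add Q, hG.1 _ p.2, add_zero]
    by_cases hvK : v ∈ K
    · by_cases hvG : v ∈ G
      · simp only [hvG, hvK, if_true, add_zero, ← cardG]
        exact Finite.card_subtype_le _
      · have hφ0 : φ v = 0 := hvK
        have hQv : Q v ≠ 0 := fun h0 => hvG <| hG.mem_of_polar_eq_zero h0 fun p hp => by
          simpa [hφ0] using (hφ v ⟨p, hp⟩).symm
        have : IsEmpty {p : G // Q (v + p) = 0} :=
          ⟨fun p => hQv (by simpa [hQ, hφ0] using p.2)⟩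
        simp
    · have hvG : v ∉ G := fun h => hvK (hGK v h)
      simp only [hvG, hvK, if_false, zero_add]
      have hφ0 : φ v ≠ 0 := hvK
      rw [← card_linear_fiber hk hφ0 (-Q v)]
      refine (Nat.card_congr (Equiv.subtypeEquivRight fun p => ?_)).le
      rw [hQ, eq_neg_iff_add_eq_zero, add_comm]
  have hdouble : q ^ (k + 1) * Nat.card {v : V // Q v = 0} =
      ∑ v : V, Nat.card {p : G // Q (v + p) = 0} := by
    rw [← cardG, ← Nat.card_prod, ← Nat.card_sigma]
    refine Nat.card_congr
      { toFun := fun x => ⟨x.2.1 - x.1, x.1, by simpa using x.2.2⟩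
        invFun := fun x => ⟨x.2.1, x.1 + x.2.1, x.2.2⟩
        left_inv := fun x => by simp
        right_inv := ?_ }
    rintro ⟨v, p, hp⟩
    simp only [Sigma.mk.injEq, add_sub_cancel_right, true_and]
    congr 1 <;> simp
  have hsum : ∑ v : V, Nat.card {p : G // Q (v + p) = 0} + Nat.card K * q ^ k ≤
      q ^ (k + 1) * q ^ (k + 1) + Nat.card V * q ^ k := by
    have h1 : ∑ v : V, (if v ∈ G then q ^ (k + 1) else 0) = q ^ (k + 1) * q ^ (k + 1) := by
      rw [← Finset.sum_filter, Finset.sum_const, smul_eq_mul, ← cardG, Nat.card_eq_fintype_card,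
        Fintype.card_subtype]
    have h2 : ∑ v : V, (if v ∈ K then 0 else q ^ k) + Nat.card K * q ^ k = Nat.card V * q ^ k := by
      have h3 : Nat.card K * q ^ k = ∑ v : V, (if v ∈ K then q ^ k else 0) := by
        rw [← Finset.sum_filter, Finset.sum_const, smul_eq_mul, Nat.card_eq_fintype_card,
          Fintype.card_subtype]
      rw [h3, ← Finset.sum_add_distrib, Nat.card_eq_fintype_card, ← smul_eq_mul,
        ← Finset.card_univ, ← Finset.sum_const]
      exact Finset.sum_congr rfl fun v _ => by split_ifs <;> simp
    have h4 := Finset.sum_le_sum fun v (_ : v ∈ Finset.univ) => hcoset v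
    rw [Finset.sum_add_distrib, h1] at h4
    omega
  rw [← hdouble, cardV] at hsum
  have h5 := Nat.mul_le_mul_right (q ^ k) cardK
  refine Nat.le_of_mul_le_mul_left ?_ (Nat.pow_pos hqpos : 0 < q ^ (k + 1))
  calc q ^ (k + 1) * (Nat.card {v : V // Q v = 0} + q ^ (k + e))
      = q ^ (k + 1) * Nat.card {v : V // Q v = 0} + q ^ (k + 1 + e) * q ^ k := by ring
    _ ≤ q ^ (k + 1) * q ^ (k + 1) + q ^ (2 * (k + 1) + e) * q ^ k := by omega
    _ = _ := by ring

/-- Sufficiently many pairwise disjoint generators form a spread. -/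
lemma isSpread_range {k e : ℕ} {Q : QuadraticForm F V} (hw : wittIndex Q = k + 1)
    (hV : finrank F V = 2 * (k + 1) + e) {ι : Type*} [Finite ι] (G : ι → Submodule F V)
    (hG : ∀ i, IsGenerator Q (G i)) (hdisj : ∀ i j, i ≠ j → G i ⊓ G j = ⊥)
    (hcard : Nat.card ι = Fintype.card F ^ (k + e) + 1) : IsSpread Q (Set.range G) := by
  classical
  have : Finite V := Module.finite_of_finite F
  have : Nonempty ι := (Nat.card_pos_iff.1 (by omega)).1
  have := Fintype.ofFinite ι
  refine ⟨?_, ?_, ?_⟩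
  · rintro _ ⟨i, rfl⟩
    exact hG i
  · rintro _ ⟨i, rfl⟩ _ ⟨j, rfl⟩ hij
    exact hdisj i j fun h => hij (h ▸ rfl)
  set q := Fintype.card F with hq
  have hqpos : 0 < q := Fintype.card_pos
  let g : (Σ i, {x : G i // x ≠ 0}) → {v : {v : V // Q v = 0} // v.1 ≠ 0} := fun x =>
    ⟨⟨x.2.1, (hG x.1).1 _ x.2.1.2⟩, by simpa using x.2.2⟩
  have hginj : Function.Injective g := by
    rintro ⟨i, ⟨x, hx⟩, hx0⟩ ⟨j, ⟨y, hy⟩, hy0⟩ h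
    have hxy : x = y := congrArg (fun z => z.1.1) h
    subst hxy
    have hij : i = j := by
      by_contra hij
      have : x ∈ G i ⊓ G j := ⟨hx, hy⟩
      rw [hdisj i j hij, Submodule.mem_bot] at this
      exact hx0 (by simpa using this)
    subst hij
    rfl
  have hcardN : ∀ i, Nat.card {x : G i // x ≠ 0} + 1 = q ^ (k + 1) := fun i => by
    have := Fintype.ofFinite (G i)
    have h1 : Nat.card (G i) = q ^ (k + 1) := by
      rw [Module.natCard_eq_pow_finrank (K := F), (hG i).2, hw, Nat.card_eq_fintype_card]
    have h2 : 0 < Nat.card (G i) := Nat.card_pos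
    rw [← h1]
    rw [Nat.card_eq_fintype_card] at h2 ⊢
    rw [Nat.card_eq_fintype_card, Fintype.card_subtype_compl, Fintype.card_subtype_eq]
    omega
  have hcardM : Nat.card {v : {v : V // Q v = 0} // v.1 ≠ 0} + 1 = Nat.card {v : V // Q v = 0} := by
    have := Fintype.ofFinite {v : V // Q v = 0}
    have h0 : ∀ v : {v : V // Q v = 0}, v.1 ≠ 0 ↔ ¬ v = ⟨0, QuadraticMap.map_zero Q⟩ :=
      fun v => by simp [Subtype.ext_iff]
    have h2 : 0 < Nat.card {v : V // Q v = 0} :=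
      Nat.card_pos_iff.2 ⟨⟨⟨0, QuadraticMap.map_zero Q⟩⟩, inferInstance⟩
    rw [Nat.card_congr (Equiv.subtypeEquivRight h0)]
    rw [Nat.card_eq_fintype_card] at h2 ⊢
    rw [Nat.card_eq_fintype_card, Fintype.card_subtype_compl, Fintype.card_subtype_eq]
    omega
  have hle : Nat.card {v : {v : V // Q v = 0} // v.1 ≠ 0} ≤
      Nat.card (Σ i, {x : G i // x ≠ 0}) := by
    obtain ⟨i₀⟩ := ‹Nonempty ι›
    have h1 := card_singular_le (hG i₀) ((hG i₀).2.trans hw) hV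
    obtain ⟨m, hm⟩ : ∃ m, q ^ (k + 1) = m + 1 := ⟨_, (hcardN i₀).symm⟩
    have h2 : ∀ i, Nat.card {x : G i // x ≠ 0} = m := fun i => by
      have := hcardN i
      omega
    rw [Nat.card_sigma, Finset.sum_congr rfl fun i _ => h2 i, Finset.sum_const,
      Finset.card_univ, ← Nat.card_eq_fintype_card, hcard, smul_eq_mul]
    have h3 : q ^ (2 * k + 1 + e) = q ^ (k + e) * (m + 1) := by rw [← hm]; ring
    rw [← hq, hm, h3] at h1
    nlinarith
  have hgsurj : Function.Surjective g :=
    (hginj.bijective_of_nat_card_le hle).2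
  intro v hv
  by_cases hv0 : v = 0
  · obtain ⟨i₀⟩ := ‹Nonempty ι›
    exact ⟨G i₀, ⟨i₀, rfl⟩, hv0 ▸ (G i₀).zero_mem⟩
  · obtain ⟨⟨i, x, hx⟩, h⟩ := hgsurj ⟨⟨v, hv⟩, hv0⟩
    have hxv : (x : V) = v := congrArg (fun z => z.1.1) h
    exact ⟨G i, ⟨i, rfl⟩, hxv ▸ x.2⟩

end Counting

section Transfer

variable {F : Type*} [Field F] {V W : Type*} [AddCommGroup V] [Module F V]
  [AddCommGroup W] [Module F W]

lemma _root_.QuadNondeg.comp_equiv {Q : QuadraticForm F V} (hQ : QuadNondeg Q) (φ : W ≃ₗ[F] V) :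
    QuadNondeg (Q.comp (φ : W →ₗ[F] V)) := by
  intro v hv hpol
  refine φ.map_eq_zero_iff.1 (hQ (φ v) hv fun x => ?_)
  simpa [QuadraticMap.polar] using hpol (φ.symm x)

lemma wittIndex_comp_equiv (Q : QuadraticForm F V) (φ : W ≃ₗ[F] V) :
    wittIndex (Q.comp (φ : W →ₗ[F] V)) = wittIndex Q := by
  unfold wittIndex
  congr 1
  ext n
  constructor
  · rintro ⟨X, hX, rfl⟩
    refine ⟨X.map (φ : W →ₗ[F] V), ?_, LinearEquiv.finrank_map_eq φ X⟩
    rintro _ ⟨x, hx, rfl⟩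
    exact hX x hx
  · rintro ⟨X, hX, rfl⟩
    refine ⟨X.map (φ.symm : V →ₗ[F] W), ?_, LinearEquiv.finrank_map_eq φ.symm X⟩
    rintro _ ⟨x, hx, rfl⟩
    simpa using hX x hx

lemma _root_.IsSpread.comp_equiv {Q : QuadraticForm F V} {S : Set (Submodule F V)} (hS : IsSpread Q S)
    (φ : W ≃ₗ[F] V) :
    IsSpread (Q.comp (φ : W →ₗ[F] V)) ((fun G => G.comap (φ : W →ₗ[F] V)) '' S) := by
  obtain ⟨h1, h2, h3⟩ := hS
  refine ⟨?_, ?_, ?_⟩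
  · rintro _ ⟨G, hG, rfl⟩
    refine ⟨fun x hx => (h1 G hG).1 _ hx, ?_⟩
    rw [wittIndex_comp_equiv, ← (h1 G hG).2]
    exact (φ.ofSubmodule' G).finrank_eq
  · rintro _ ⟨G, hG, rfl⟩ _ ⟨G', hG', rfl⟩ hne
    rw [← Submodule.comap_inf, h2 G hG G' hG' fun h => hne (h ▸ rfl), Submodule.comap_bot]
    exact φ.ker
  · intro v hv
    obtain ⟨G, hG, hvG⟩ := h3 (φ v) hv
    exact ⟨_, ⟨G, hG, rfl⟩, hvG⟩

end Transfer

section Hyperbolic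

variable {F : Type*} [Field F] {V : Type*} [AddCommGroup V] [Module F V]

/-- The orthogonal sum of `Q` and a hyperbolic plane. -/
def addHyperbolic (Q : QuadraticForm F V) : QuadraticForm F (V × F × F) :=
  Q.prod (QuadraticMap.linMulLin (LinearMap.fst F F F) (LinearMap.snd F F F))

@[simp]
lemma addHyperbolic_apply (Q : QuadraticForm F V) (x : V × F × F) :
    addHyperbolic Q x = Q x.1 + x.2.1 * x.2.2 := by
  simp [addHyperbolic]

lemma polar_addHyperbolic (Q : QuadraticForm F V) (x y : V × F × F) :
    QuadraticMap.polar (addHyperbolic Q) x y =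
      QuadraticMap.polar Q x.1 y.1 + (x.2.1 * y.2.2 + x.2.2 * y.2.1) := by
  simp only [QuadraticMap.polar, addHyperbolic_apply, Prod.fst_add, Prod.snd_add]
  ring

lemma _root_.QuadNondeg.addHyperbolic {Q : QuadraticForm F V} (hQ : QuadNondeg Q) :
    QuadNondeg (addHyperbolic Q) := by
  rintro ⟨v, a, b⟩ hv hpol
  simp only [polar_addHyperbolic] at hpol
  have hb : b = 0 := by simpa using hpol (0, 1, 0)
  have ha : a = 0 := by simpa using hpol (0, 0, 1)
  subst ha hb
  have : v = 0 := hQ v (by simpa using hv) fun x => by simpa using hpol (x, 0, 0)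
  simp [this]

/-- The subspace spanned by a subspace of `V` and the second vector of the hyperbolic pair. -/
def extend (G : Submodule F V) : Submodule F (V × F × F) :=
  G.prod (LinearMap.range (LinearMap.inr F F F))

lemma finrank_extend [FiniteDimensional F V] (G : Submodule F V) :
    finrank F (extend G) = finrank F G + 1 := by
  have h : extend G = LinearMap.range (G.subtype.prodMap (LinearMap.inr F F F)) := by
    rw [LinearMap.range_prodMap, Submodule.range_subtype]
    rfl
  rw [h, LinearMap.finrank_range_of_inj, finrank_prod, finrank_self]
  exact Function.Injective.prodMap G.injective_subtype LinearMap.inr_injective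

lemma _root_.IsTotallySingular.extend {Q : QuadraticForm F V} {G : Submodule F V}
    (hG : IsTotallySingular Q G) : IsTotallySingular (addHyperbolic Q) (extend G) := by
  rintro ⟨v, _⟩ ⟨hv, b, rfl⟩
  simpa using hG v hv

lemma wittIndex_addHyperbolic [FiniteDimensional F V] {Q : QuadraticForm F V}
    {G : Submodule F V} (hG : IsGenerator Q G) :
    wittIndex (addHyperbolic Q) = wittIndex Q + 1 := by
  refine le_antisymm (wittIndex_le fun W hW => ?_) ?_
  · let α : W →ₗ[F] F := (LinearMap.fst F F F ∘ₗ LinearMap.snd F V (F × F)) ∘ₗ W.subtype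
    let W₀ : Submodule F V := (LinearMap.ker α).map (LinearMap.fst F V (F × F) ∘ₗ W.subtype)
    have hα : ∀ x : W, α x = x.1.2.1 := fun x => rfl
    have hW₀ : IsTotallySingular Q W₀ := by
      rintro _ ⟨x, hx, rfl⟩
      have := hW x.1 x.2
      rw [addHyperbolic_apply, ← hα, LinearMap.mem_ker.1 hx] at this
      simpa using this
    have h1 := hW₀.finrank_le_wittIndex
    have h2 := α.finrank_range_add_finrank_ker
    have h3 := (LinearMap.range α).finrank_le
    rw [finrank_self] at h3
    let β : LinearMap.ker α →ₗ[F] V :=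
      (LinearMap.fst F V (F × F) ∘ₗ W.subtype) ∘ₗ (LinearMap.ker α).subtype
    have hβ : LinearMap.range β = W₀ := by
      rw [LinearMap.range_comp, Submodule.range_subtype]
    have h4 := LinearMap.finrank_range_add_finrank_ker (K := F) (V := LinearMap.ker α) (V₂ := V) β
    rw [hβ] at h4
    by_cases hu : ((0, 0, 1) : V × F × F) ∈ W
    · have hα0 : α = 0 := by
        ext x
        have := hW.polar_eq_zero x.2 hu
        simpa [polar_addHyperbolic, hα] using this
      have h5 : finrank F (LinearMap.range α) = 0 := by simp [hα0]
      have h6 : finrank F (LinearMap.ker β) ≤ 1 := by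
        let γ : LinearMap.ker β →ₗ[F] F := (LinearMap.snd F F F ∘ₗ LinearMap.snd F V (F × F)) ∘ₗ
          W.subtype ∘ₗ (LinearMap.ker α).subtype ∘ₗ (LinearMap.ker β).subtype
        have hγ : Function.Injective γ := by
          intro x y hxy
          have h₁ : x.1.1.1.1 = y.1.1.1.1 :=
            (show x.1.1.1.1 = 0 from x.2).trans (show y.1.1.1.1 = 0 from y.2).symm
          have h₂ : x.1.1.1.2.1 = y.1.1.1.2.1 :=
            (show x.1.1.1.2.1 = 0 from x.1.2).trans (show y.1.1.1.2.1 = 0 from y.1.2).symm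
          have h₃ : x.1.1.1.2.2 = y.1.1.1.2.2 := hxy
          exact Subtype.ext (Subtype.ext (Subtype.ext (Prod.ext h₁ (Prod.ext h₂ h₃))))
        simpa using LinearMap.finrank_le_finrank_of_injective hγ
      omega
    · have h6 : LinearMap.ker β = ⊥ := by
        rw [LinearMap.ker_eq_bot']
        rintro ⟨⟨⟨v, a, b⟩, hx⟩, hx'⟩ h0
        have hv : v = 0 := h0
        have ha : a = 0 := hx'
        subst hv ha
        have hb : b = 0 := by
          by_contra hb
          apply hu
          have := W.smul_mem b⁻¹ hx
          simpa [hb] using this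
        subst hb
        rfl
      rw [h6, finrank_bot] at h4
      omega
  · rw [← hG.2, ← finrank_extend]
    exact hG.1.extend.finrank_le_wittIndex

end Hyperbolic

section Lift

variable {F : Type*} [Field F] {U : Type*} [AddCommGroup U] [Module F U] {H : Submodule F U}

/-- The linear map lifting a subspace of `U` to the quadric, where `(π, f)` are the coordinates
of `U` and `h` is the `H`-coordinate of a base point of the subspace. -/
def liftMap (Q : QuadraticForm F H) (π : U →ₗ[F] H) (f : U →ₗ[F] F) (h : H) :
    U →ₗ[F] H × F × F :=
  π.prod (f.prod (Q h • f - QuadraticMap.polarBilin Q h ∘ₗ π))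

lemma liftMap_apply (Q : QuadraticForm F H) (π : U →ₗ[F] H) (f : U →ₗ[F] F) (h : H) (x : U) :
    liftMap Q π f h x = (π x, f x, Q h * f x - QuadraticMap.polar Q h (π x)) := rfl

variable {Q : QuadraticForm F H} {π : U →ₗ[F] H} {f : U →ₗ[F] F}

lemma isTotallySingular_map_liftMap (hπ : ∀ x : H, π x = x) (hf : ∀ x, f x = 0 ↔ x ∈ H)
    {S : Submodule F U} (hS : IsTotallySingular Q (S.comap H.subtype)) {s : U} (hs : s ∈ S)
    (hfs : f s = 1) : IsTotallySingular (addHyperbolic Q) (S.map (liftMap Q π f (π s))) := by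
  rintro _ ⟨x, hx, rfl⟩
  have hpH : x - f x • s ∈ H := (hf _).1 (by simp [hfs])
  have hpS : x - f x • s ∈ S := S.sub_mem hx (S.smul_mem _ hs)
  set p : H := ⟨x - f x • s, hpH⟩ with hp
  have hQp : Q p = 0 := hS p hpS
  have hπx : π x = p + f x • π s := by
    rw [← hπ p, hp, map_sub, map_smul, sub_add_cancel]
  rw [addHyperbolic_apply, liftMap_apply]
  simp only
  rw [hπx, QuadraticMap.map_add Q, hQp, QuadraticMap.map_smul, QuadraticMap.polar_smul_right,
    QuadraticMap.polar_add_right, QuadraticMap.polar_smul_right, QuadraticMap.polar_self,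
    QuadraticMap.polar_comm Q p]
  simp only [smul_eq_mul, nsmul_eq_mul, Nat.cast_ofNat]
  ring

lemma liftMap_injective {t : U} (hdec : ∀ x, x = π x + f x • t) (h : H) :
    Function.Injective (liftMap Q π f h) := by
  intro x y hxy
  simp only [liftMap_apply, Prod.mk.injEq] at hxy
  rw [hdec x, hdec y, hxy.1, hxy.2.1]

/-- Coordinates on a vector space adapted to a hyperplane. -/
lemma exists_hyperplane_coordinates [FiniteDimensional F U]
    (hH : finrank F U = finrank F H + 1) :
    ∃ (π : U →ₗ[F] H) (f : U →ₗ[F] F) (t : U),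
      (∀ x : H, π x = x) ∧ (∀ x, f x = 0 ↔ x ∈ H) ∧ ∀ x, x = π x + f x • t := by
  have hlt : H < ⊤ := lt_top_iff_ne_top.2 fun h => by
    rw [h, finrank_top] at hH
    omega
  obtain ⟨f, hf0, hHf⟩ := H.exists_le_ker_of_lt_top hlt
  have hker : H = LinearMap.ker f := by
    refine Submodule.eq_of_le_of_finrank_le hHf ?_
    have h := f.finrank_range_add_finrank_ker
    rw [LinearMap.range_eq_top.2 (LinearMap.surjective hf0), finrank_top, finrank_self] at h
    omega
  obtain ⟨t, ht⟩ := LinearMap.surjective hf0 1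
  have hf : ∀ x, f x = 0 ↔ x ∈ H := fun x => by rw [hker, LinearMap.mem_ker]
  refine ⟨(LinearMap.id - f.smulRight t).codRestrict H fun x => (hf _).1 (by simp [ht]), f, t,
    fun x => Subtype.ext ?_, hf, fun x => by simp⟩
  simp [(hf x).2 x.2]

end Lift

end Avsp

open Avsp

theorem avsp_gives_spread {F : Type*} [Field F] [Fintype F] (e r : ℕ)
    (he : e = 0 ∨ e = 1 ∨ e = 2) (hr : 0 < r) (hmod : r % 2 = (e + 1) % 2)
    (U : Type*) [AddCommGroup U] [Module F U] [FiniteDimensional F U]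
    (hU : Module.finrank F U = r + 2)
    (H : Submodule F U) (hH : Module.finrank F ↥H = r + 1)
    (Q : QuadraticForm F ↥H) (hQnd : QuadNondeg Q)
    (hdef : Module.finrank F ↥H = 2 * wittIndex Q + e)
    (Pgen : Submodule F ↥H) (hPgen : IsGenerator Q Pgen)
    (P : Set (Submodule F U)) (hP : IsAvsp e r H Q Pgen P) :
    ∃ Q' : QuadraticForm F (Fin (r + 3) → F),
      QuadNondeg Q' ∧
      Module.finrank F (Fin (r + 3) → F) = 2 * wittIndex Q' + e ∧
      ∃ S : Set (Submodule F (Fin (r + 3) → F)), IsSpread Q' S := by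
  classical
  obtain ⟨hcard, hdim, hpart, hgen, -, hinter, hnd⟩ := hP
  set w := wittIndex Q with hw
  have hrw : r + 1 = 2 * w + e := hH ▸ hdef
  rw [show (r + e + 1) / 2 = w + e by omega] at hcard
  rw [show (r + 3 - e) / 2 = w + 1 by omega] at hdim
  obtain ⟨π, f, t, hπ, hf, hdec⟩ : ∃ (π : U →ₗ[F] H) (f : U →ₗ[F] F) (t : U),
      (∀ x : H, π x = x) ∧ (∀ x, f x = 0 ↔ x ∈ H) ∧ ∀ x, x = π x + f x • t :=
    exists_hyperplane_coordinates (by omega)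
  have hbase : ∀ S : P, ∃ s ∈ S.1, f s = 1 := by
    rintro ⟨S, hS⟩
    obtain ⟨s, hs, hsH⟩ := SetLike.not_le_iff_exists.1 (hdim S hS).2
    have hfs : f s ≠ 0 := fun h => hsH ((hf s).1 h)
    exact ⟨(f s)⁻¹ • s, S.smul_mem _ hs, by simp [hfs]⟩
  choose s hs hfs using hbase
  have hwitt : wittIndex (addHyperbolic Q) = w + 1 := wittIndex_addHyperbolic hPgen
  have hfin : finrank F (H × F × F) = 2 * (w + 1) + e := by
    simp only [finrank_prod, finrank_self]
    omega
  let G : Option P → Submodule F (H × F × F) := fun i =>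
    i.elim (extend Pgen) fun S => S.1.map (liftMap Q π f (π (s S)))
  have hGts : ∀ S : P, IsTotallySingular (addHyperbolic Q) (S.1.map (liftMap Q π f (π (s S)))) :=
    fun S => isTotallySingular_map_liftMap hπ hf (hgen S S.2).1.1 (hs S) (hfs S)
  have hG : ∀ i, IsGenerator (addHyperbolic Q) (G i) := by
    rintro (_ | S)
    · exact ⟨hPgen.1.extend, by rw [hwitt, hw, ← hPgen.2]; exact finrank_extend Pgen⟩
    · refine ⟨hGts S, ?_⟩
      rw [hwitt, ← (hdim S S.2).1]
      exact (Submodule.equivMapOfInjective _ (liftMap_injective hdec _) S.1).finrank_eq.symm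
  have hdisj₀ : ∀ S : P, G none ⊓ G (some S) = ⊥ := by
    intro S
    rw [eq_bot_iff]
    rintro _ ⟨⟨hx, b, hb⟩, x, hxS, rfl⟩
    rw [liftMap_apply] at hx hb
    have hfx : f x = 0 := (congrArg Prod.fst hb).symm
    have hxH : x = π x := by simpa [hfx] using hdec x
    have : π x ∈ S.1.comap H.subtype ⊓ Pgen := ⟨by simpa [← hxH] using hxS, hx⟩
    rw [(hgen S S.2).2, Submodule.mem_bot] at this
    simp [liftMap_apply, this, hfx]
  have hdisj₁ : ∀ S T : P, S ≠ T → G (some S) ⊓ G (some T) = ⊥ := by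
    intro S T hST
    have hST' : S.1 ≠ T.1 := fun h => hST (Subtype.ext h)
    rw [eq_bot_iff]
    rintro _ ⟨⟨x, hxS, rfl⟩, y, hyT, hxy⟩
    have hyx : y = x := by
      simp only [liftMap_apply, Prod.mk.injEq] at hxy
      rw [hdec x, hdec y, hxy.1, hxy.2.1]
    subst hyx
    by_contra hne
    have hy0 : y ≠ 0 := by
      rintro rfl
      exact hne (by simp)
    have hyH : y ∈ H := by
      by_contra hyH
      obtain ⟨X, -, hX⟩ := hpart (F ∙ y) (finrank_span_singleton hy0)
        (by rwa [Submodule.span_singleton_le_iff_mem])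
      exact hST' ((hX S ⟨S.2, by rwa [Submodule.span_singleton_le_iff_mem]⟩).trans
        (hX T ⟨T.2, by rwa [Submodule.span_singleton_le_iff_mem]⟩).symm)
    set I := S.1.comap H.subtype ⊓ T.1.comap H.subtype with hI
    have hI1 : finrank F I = 1 := by
      refine le_antisymm ?_ (Submodule.one_le_finrank_iff.2 ?_)
      · refine le_trans ?_ (hinter S S.2 T T.2 hST')
        rw [← Submodule.finrank_map_subtype_eq H I]
        refine Submodule.finrank_mono ?_
        rintro _ ⟨x, hx, rfl⟩
        exact hx
      · refine (Submodule.ne_bot_iff I).2 ⟨⟨y, hyH⟩, ⟨hxS, hyT⟩, fun h => hy0 ?_⟩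
        exact congrArg Subtype.val h
    have hfy : f y = 0 := (hf y).2 hyH
    have hπy : π y = ⟨y, hyH⟩ := hπ ⟨y, hyH⟩
    have hS₀ : ∀ u ∈ S.1, QuadraticMap.polar Q (π y) (π u) +
        (liftMap Q π f (π (s S)) y).2.2 * f u = 0 := fun u hu => by
      have := (hGts S).polar_eq_zero (Submodule.mem_map_of_mem hxS) (Submodule.mem_map_of_mem hu)
      rw [polar_addHyperbolic] at this
      simpa [liftMap_apply, hfy] using this
    have hT₀ : ∀ u ∈ T.1, QuadraticMap.polar Q (π y) (π u) +
        (liftMap Q π f (π (s S)) y).2.2 * f u = 0 := fun u hu => by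
      have := (hGts T).polar_eq_zero (Submodule.mem_map_of_mem hyT) (Submodule.mem_map_of_mem hu)
      rw [hxy, polar_addHyperbolic] at this
      simpa [liftMap_apply, hfy] using this
    have hrad := (hnd S S.2 T T.2 hST' hI1).1 ⟨⟨y, hyH⟩, Submodule.mem_sup_left hxS⟩
      ((hgen S S.2).1.1 ⟨y, hyH⟩ hxS) ?_
    · exact hy0 (congrArg (fun z => (z.1 : U)) hrad)
    rintro ⟨v, hv⟩
    obtain ⟨a, ha, b, hb, hab⟩ := Submodule.mem_sup.1 hv
    have hab' : a + b = v := hab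
    have hv' : v = π a + π b := by rw [← map_add, hab', hπ]
    have hfv : f a + f b = 0 := by
      rw [← map_add, hab']
      exact (hf v).2 v.2
    change QuadraticMap.polar Q ⟨y, hyH⟩ v = 0
    rw [← hπy, hv', QuadraticMap.polar_add_right]
    linear_combination hS₀ a ha + hT₀ b hb - (liftMap Q π f (π (s S)) y).2.2 * hfv
  have hPfin : Finite P := Set.finite_of_ncard_pos (by rw [hcard]; positivity)
  have hspread : IsSpread (addHyperbolic Q) (Set.range G) := by
    refine isSpread_range hwitt hfin G hG ?_ ?_
    · rintro (_ | S) (_ | T) hij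
      · exact absurd rfl hij
      · exact hdisj₀ T
      · rw [inf_comm]
        exact hdisj₀ S
      · exact hdisj₁ S T fun h => hij (h ▸ rfl)
    · rw [Finite.card_option, Nat.card_coe_set_eq, hcard]
  have hfin' : finrank F (Fin (r + 3) → F) = finrank F (H × F × F) := by
    rw [hfin, finrank_fin_fun]
    omega
  let φ : (Fin (r + 3) → F) ≃ₗ[F] H × F × F := LinearEquiv.ofFinrankEq _ _ hfin'
  exact ⟨_, hQnd.addHyperbolic.comp_equiv φ, by rw [wittIndex_comp_equiv, hwitt, hfin', hfin],
    _, hspread.comp_equiv φ⟩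
end

section
/- Let e ∈ {0,1,2} and let r be an integer with r ≥ e+3 and r ≡ e+1 (mod 2). Then the following are equivalent: (i) there exist an F-vector space U of dimension r+2, a hyperplane H of U, a nondegenerate quadratic form Q on H of Witt defect e, a generator Π of Q, and a hyperbolic, parabolic or elliptic avsp for (U, H, Q, Π) (according as e = 0, 1 or 2); (ii) there exist an F-vector space V of dimension r+3 and a nondegenerate quadratic form Q' on V of Witt defect e admitting a spread. -/
open Module Submodule

lemma polar_eq_zero_of_mem {F V : Type*} [Field F] [AddCommGroup V] [Module F V]
    {Q : QuadraticForm F V} {W : Submodule F V} (hW : IsTotallySingular Q W) {x y : V}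
    (hx : x ∈ W) (hy : y ∈ W) : QuadraticMap.polar Q x y = 0 := by
  simp [QuadraticMap.polar, hW _ (W.add_mem hx hy), hW _ hx, hW _ hy]

section Witt

variable {F V : Type*} [Field F] [AddCommGroup V] [Module F V]

lemma IsTotallySingular.sup_span {Q : QuadraticForm F V} {W : Submodule F V}
    (hW : IsTotallySingular Q W) {v : V} (hv : Q v = 0)
    (hp : ∀ x ∈ W, QuadraticMap.polar Q x v = 0) : IsTotallySingular Q (W ⊔ span F {v}) := by
  intro x hx
  obtain ⟨y, hy, c, rfl⟩ := by simpa [mem_sup, mem_span_singleton] using hx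
  simp [QuadraticMap.map_add, hW y hy, QuadraticMap.map_smul, hv, QuadraticMap.polar_smul_right,
    hp y hy]

variable [FiniteDimensional F V]

lemma IsTotallySingular.finrank_le {Q : QuadraticForm F V} {W : Submodule F V}
    (hW : IsTotallySingular Q W) : finrank F W ≤ wittIndex Q :=
  le_csSup ⟨finrank F V, by rintro _ ⟨W, -, rfl⟩; exact W.finrank_le⟩ ⟨W, hW, rfl⟩

lemma exists_isGenerator (Q : QuadraticForm F V) : ∃ W, IsGenerator Q W := by
  have h := Nat.sSup_mem
    (s := {n : ℕ | ∃ W : Submodule F V, IsTotallySingular Q W ∧ finrank F W = n})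
    ⟨0, ⊥, by simp [IsTotallySingular], finrank_bot F V⟩
    ⟨finrank F V, by rintro _ ⟨W, -, rfl⟩; exact W.finrank_le⟩
  exact h

lemma wittIndex_le {Q : QuadraticForm F V} {n : ℕ}
    (h : ∀ W, IsTotallySingular Q W → finrank F W ≤ n) : wittIndex Q ≤ n := by
  obtain ⟨W, hW, hn⟩ := exists_isGenerator Q
  exact hn ▸ h W hW

lemma IsGenerator.mem_of_polar {Q : QuadraticForm F V} {W : Submodule F V}
    (hW : IsGenerator Q W) {v : V} (hv : Q v = 0)
    (hp : ∀ x ∈ W, QuadraticMap.polar Q x v = 0) : v ∈ W := by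
  have h := (hW.1.sup_span hv hp).finrank_le
  rw [← hW.2] at h
  have := Submodule.eq_of_le_of_finrank_le (le_sup_left : W ≤ W ⊔ span F {v}) h
  rw [this]
  exact mem_sup_right (mem_span_singleton_self v)

lemma IsGenerator.wittIndex_restrict {Q : QuadraticForm F V} {W M : Submodule F V}
    (hW : IsGenerator Q W) (hM : W ≤ M) : wittIndex (Q.comp M.subtype) = wittIndex Q := by
  apply le_antisymm
  · refine wittIndex_le fun X hX => ?_
    rw [← finrank_map_subtype_eq M X]
    apply IsTotallySingular.finrank_le
    rintro _ ⟨x, hx, rfl⟩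
    exact hX x hx
  · rw [← hW.2, ← (comapSubtypeEquivOfLe hM).finrank_eq]
    apply IsTotallySingular.finrank_le
    intro x hx
    exact hW.1 _ hx

lemma eq_zero_of_wittIndex_eq_zero {Q : QuadraticForm F V} (h : wittIndex Q = 0) {v : V}
    (hv : Q v = 0) : v = 0 := by
  by_contra hne
  have hs : IsTotallySingular Q (span F {v}) := by
    intro x hx
    obtain ⟨c, rfl⟩ := mem_span_singleton.1 hx
    simp [QuadraticMap.map_smul, hv]
  have := hs.finrank_le
  rw [finrank_span_singleton hne] at this
  omega

end Witt

section Isometry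

variable {F V V' : Type*} [Field F] [AddCommGroup V] [Module F V]
  [AddCommGroup V'] [Module F V']
  {Q : QuadraticForm F V} {Q' : QuadraticForm F V'}

lemma IsTotallySingular.map_isometryEquiv (φ : Q.IsometryEquiv Q') {W : Submodule F V}
    (hW : IsTotallySingular Q W) :
    IsTotallySingular Q' (W.map (φ.toLinearEquiv : V →ₗ[F] V')) := by
  rintro _ ⟨x, hx, rfl⟩
  exact (φ.map_app x).trans (hW x hx)

lemma QuadNondeg.of_isometryEquiv (φ : Q.IsometryEquiv Q') (h : QuadNondeg Q) :
    QuadNondeg Q' := by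
  intro v hv hp
  have h0 : φ.symm v = 0 := by
    refine h _ ((φ.symm.map_app v).trans hv) fun x => ?_
    have := hp (φ x)
    simp only [QuadraticMap.polar] at this ⊢
    rw [← φ.map_app, ← φ.map_app (φ.symm v), ← φ.map_app x]
    have h1 : φ (φ.symm v + x) = v + φ x := by
      rw [map_add]; congr 1; exact φ.toLinearEquiv.apply_symm_apply v
    have h2 : φ (φ.symm v) = v := φ.toLinearEquiv.apply_symm_apply v
    rw [h1, h2]; exact this
  exact φ.symm.toLinearEquiv.map_eq_zero_iff.1 h0

lemma QuadraticMap.IsometryEquiv.natCard_zeros_eq (φ : Q.IsometryEquiv Q') :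
    Nat.card {v // Q v = 0} = Nat.card {v // Q' v = 0} :=
  Nat.card_congr (φ.toEquiv.subtypeEquiv fun v => by
    rw [← φ.map_app v]; rfl)

variable [FiniteDimensional F V] [FiniteDimensional F V']

lemma QuadraticMap.IsometryEquiv.wittIndex_eq (φ : Q.IsometryEquiv Q') :
    wittIndex Q = wittIndex Q' := by
  apply le_antisymm
  · refine wittIndex_le fun W hW => ?_
    rw [← LinearEquiv.finrank_map_eq φ.toLinearEquiv W]
    exact (hW.map_isometryEquiv φ).finrank_le
  · refine wittIndex_le fun W hW => ?_
    rw [← LinearEquiv.finrank_map_eq φ.symm.toLinearEquiv W]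
    exact (hW.map_isometryEquiv φ.symm).finrank_le

lemma IsGenerator.map_isometryEquiv (φ : Q.IsometryEquiv Q') {W : Submodule F V}
    (hW : IsGenerator Q W) :
    IsGenerator Q' (W.map (φ.toLinearEquiv : V →ₗ[F] V')) :=
  ⟨hW.1.map_isometryEquiv φ,
    (LinearEquiv.finrank_map_eq φ.toLinearEquiv W).trans (hW.2.trans φ.wittIndex_eq)⟩

lemma IsSpread.map_isometryEquiv (φ : Q.IsometryEquiv Q') {S : Set (Submodule F V)}
    (hS : IsSpread Q S) :
    IsSpread Q' ((fun W => W.map (φ.toLinearEquiv : V →ₗ[F] V')) '' S) := by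
  refine ⟨?_, ?_, ?_⟩
  · rintro _ ⟨W, hW, rfl⟩
    exact (hS.1 W hW).map_isometryEquiv φ
  · rintro _ ⟨W, hW, rfl⟩ _ ⟨X, hX, rfl⟩ hne
    have : W ≠ X := by rintro rfl; exact hne rfl
    simp only
    rw [← Submodule.map_inf _ φ.toLinearEquiv.injective, hS.2.1 W hW X hX this, Submodule.map_bot]
  · intro v hv
    obtain ⟨G, hG, hvG⟩ := hS.2.2 (φ.symm v) ((φ.symm.map_app v).trans hv)
    exact ⟨_, ⟨G, hG, rfl⟩, _, hvG, φ.toLinearEquiv.apply_symm_apply v⟩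

end Isometry

section Hyperbolic

variable {F V : Type*} [Field F] [AddCommGroup V] [Module F V]

/-- The orthogonal sum of a hyperbolic plane with a quadratic form `Q`. -/
def hyperbolicExt (Q : QuadraticForm F V) : QuadraticForm F (F × F × V) :=
  QuadraticMap.linMulLin (LinearMap.fst F F (F × V))
      (LinearMap.fst F F V ∘ₗ LinearMap.snd F F (F × V)) +
    Q.comp (LinearMap.snd F F V ∘ₗ LinearMap.snd F F (F × V))

@[simp]
lemma hyperbolicExt_apply (Q : QuadraticForm F V) (v : F × F × V) :
    hyperbolicExt Q v = v.1 * v.2.1 + Q v.2.2 := by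
  simp [hyperbolicExt]

lemma polar_hyperbolicExt (Q : QuadraticForm F V) (v w : F × F × V) :
    QuadraticMap.polar (hyperbolicExt Q) v w =
      v.1 * w.2.1 + w.1 * v.2.1 + QuadraticMap.polar Q v.2.2 w.2.2 := by
  simp [QuadraticMap.polar]; ring

lemma quadNondeg_hyperbolicExt_iff (Q : QuadraticForm F V) :
    QuadNondeg (hyperbolicExt Q) ↔ QuadNondeg Q := by
  constructor
  · intro h v hv hp
    have := h (0, 0, v) (by simp [hv]) (fun x => by simp [polar_hyperbolicExt, hp])
    simpa using this
  · rintro h ⟨a, b, v⟩ hv hp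
    have ha : a = 0 := by simpa [polar_hyperbolicExt] using hp (0, 1, 0)
    have hb : b = 0 := by simpa [polar_hyperbolicExt] using hp (1, 0, 0)
    subst ha hb
    have := h v (by simpa using hv) fun x => by simpa [polar_hyperbolicExt] using hp (0, 0, x)
    simp [this]

/-- The projection to `V` of the part of `W` orthogonal to the first basis vector of the
hyperbolic plane. -/
def shadow (W : Submodule F (F × F × V)) : Submodule F V :=
  (W ⊓ LinearMap.ker (LinearMap.fst F F V ∘ₗ LinearMap.snd F F (F × V))).map
    (LinearMap.snd F F V ∘ₗ LinearMap.snd F F (F × V))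

lemma mem_shadow {W : Submodule F (F × F × V)} {v : V} :
    v ∈ shadow W ↔ ∃ a : F, (a, (0 : F), v) ∈ W := by
  simp [shadow]

protected lemma IsTotallySingular.shadow {Q : QuadraticForm F V} {W : Submodule F (F × F × V)}
    (hW : IsTotallySingular (hyperbolicExt Q) W) : IsTotallySingular Q (shadow W) := by
  intro v hv
  obtain ⟨a, ha⟩ := mem_shadow.1 hv
  simpa using hW _ ha

lemma IsTotallySingular.snd_fst_eq_zero {Q : QuadraticForm F V} {W : Submodule F (F × F × V)}
    (hW : IsTotallySingular (hyperbolicExt Q) W) (hz : ((1 : F), (0 : F), (0 : V)) ∈ W)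
    {v : F × F × V} (hv : v ∈ W) : v.2.1 = 0 := by
  simpa [polar_hyperbolicExt] using polar_eq_zero_of_mem hW hz hv

protected lemma IsTotallySingular.hyperbolicExt {Q : QuadraticForm F V} {W : Submodule F V}
    (hW : IsTotallySingular Q W) :
    IsTotallySingular (hyperbolicExt Q)
      ((⊤ : Submodule F F).prod ((⊥ : Submodule F F).prod W)) := by
  rintro ⟨a, b, v⟩ ⟨-, hb, hv⟩
  have hb' : b = 0 := hb
  simp [hb', hW v hv]

/-- For a linear functional, passing to the kernel drops the dimension by at most one. -/
lemma finrank_le_finrank_inf_ker_add_one {M : Type*} [AddCommGroup M] [Module F M]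
    [FiniteDimensional F M] (W : Submodule F M) (f : M →ₗ[F] F) :
    finrank F W ≤ finrank F ↥(W ⊓ LinearMap.ker f) + 1 := by
  have h := (f.domRestrict W).finrank_range_add_finrank_ker
  have h1 : finrank F (LinearMap.range (f.domRestrict W)) ≤ 1 :=
    (Submodule.finrank_le _).trans (finrank_self F).le
  have h2 : finrank F (LinearMap.ker (f.domRestrict W)) = finrank F ↥(W ⊓ LinearMap.ker f) := by
    rw [LinearMap.ker_domRestrict, ← finrank_map_subtype_eq, Submodule.map_comap_subtype]
  omega

variable [FiniteDimensional F V]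

lemma IsTotallySingular.finrank_le_finrank_shadow_add_one {Q : QuadraticForm F V}
    {W : Submodule F (F × F × V)} (hW : IsTotallySingular (hyperbolicExt Q) W) :
    finrank F W ≤ finrank F (shadow W) + 1 := by
  by_cases hz : ((1 : F), (0 : F), (0 : V)) ∈ W
  · refine (finrank_le_finrank_inf_ker_add_one W (LinearMap.fst F F (F × V))).trans ?_
    gcongr
    have hinj : Function.Injective ((LinearMap.snd F F V ∘ₗ LinearMap.snd F F (F × V)).domRestrict
        (W ⊓ LinearMap.ker (LinearMap.fst F F (F × V)))) := by
      rw [← LinearMap.ker_eq_bot, LinearMap.ker_eq_bot']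
      rintro ⟨⟨a, b, v⟩, hm, ha⟩ hv
      have hb := hW.snd_fst_eq_zero hz hm
      have ha' : a = 0 := ha
      have hv' : v = 0 := hv
      simp_all
    rw [← LinearMap.finrank_range_of_inj hinj]
    apply Submodule.finrank_mono
    rintro _ ⟨⟨⟨a, b, v⟩, hm, ha⟩, rfl⟩
    have hb := hW.snd_fst_eq_zero hz hm
    simp only at hb
    subst hb
    exact mem_shadow.2 ⟨a, hm⟩
  · refine (finrank_le_finrank_inf_ker_add_one W
      (LinearMap.fst F F V ∘ₗ LinearMap.snd F F (F × V))).trans ?_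
    gcongr
    rw [shadow, ← LinearMap.range_domRestrict]
    apply le_of_eq
    symm
    apply LinearMap.finrank_range_of_inj
    rw [← LinearMap.ker_eq_bot, LinearMap.ker_eq_bot']
    rintro ⟨⟨a, b, v⟩, hm, hb⟩ hv
    have hb' : b = 0 := hb
    have hv' : v = 0 := hv
    by_cases ha : a = 0
    · exact Subtype.ext (by simp [ha, hb', hv'])
    · exact (hz (by simpa [ha, hb', hv'] using W.smul_mem a⁻¹ hm)).elim

lemma finrank_top_prod_bot_prod (W : Submodule F V) :
    finrank F ((⊤ : Submodule F F).prod ((⊥ : Submodule F F).prod W)) = finrank F W + 1 := by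
  let f : F × W →ₗ[F] F × F × V :=
    LinearMap.prodMap LinearMap.id (LinearMap.inr F F V ∘ₗ W.subtype)
  have hf : Function.Injective f := by
    rintro ⟨a, v⟩ ⟨b, w⟩ h
    simpa [f] using h
  have hr : (⊤ : Submodule F F).prod ((⊥ : Submodule F F).prod W) = LinearMap.range f := by
    ext ⟨a, b, v⟩
    simp [f, eq_comm]
  rw [hr, LinearMap.finrank_range_of_inj hf, finrank_prod, finrank_self, add_comm]

lemma wittIndex_hyperbolicExt (Q : QuadraticForm F V) :
    wittIndex (hyperbolicExt Q) = wittIndex Q + 1 := by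
  apply le_antisymm
  · refine wittIndex_le fun W hW => ?_
    have := hW.finrank_le_finrank_shadow_add_one
    have := hW.shadow.finrank_le
    omega
  · obtain ⟨W, hW, hn⟩ := exists_isGenerator Q
    have := hW.hyperbolicExt.finrank_le
    rwa [finrank_top_prod_bot_prod, hn] at this

protected lemma IsGenerator.hyperbolicExt {Q : QuadraticForm F V} {W : Submodule F V}
    (hW : IsGenerator Q W) :
    IsGenerator (hyperbolicExt Q)
      ((⊤ : Submodule F F).prod ((⊥ : Submodule F F).prod W)) :=
  ⟨hW.1.hyperbolicExt, by rw [finrank_top_prod_bot_prod, hW.2, wittIndex_hyperbolicExt]⟩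

protected lemma IsGenerator.shadow {Q : QuadraticForm F V} {W : Submodule F (F × F × V)}
    (hW : IsGenerator (hyperbolicExt Q) W) : IsGenerator Q (shadow W) := by
  refine ⟨hW.1.shadow, hW.1.shadow.finrank_le.antisymm ?_⟩
  have := hW.1.finrank_le_finrank_shadow_add_one
  have := hW.2
  rw [wittIndex_hyperbolicExt] at this
  omega

end Hyperbolic

/-- A nondegenerate quadratic form with a nonzero singular vector splits off a hyperbolic plane. -/
lemma exists_isometryEquiv_hyperbolicExt {F V : Type*} [Field F] [AddCommGroup V] [Module F V]
    [FiniteDimensional F V] {Q : QuadraticForm F V} (hQ : QuadNondeg Q) (hw : wittIndex Q ≠ 0) :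
    ∃ K : Submodule F V, Nonempty ((hyperbolicExt (Q.comp K.subtype)).IsometryEquiv Q) := by
  obtain ⟨z, hz, hz0⟩ : ∃ z, Q z = 0 ∧ z ≠ 0 := by
    obtain ⟨W, hW, hn⟩ := exists_isGenerator Q
    have : W ≠ ⊥ := by
      rintro rfl
      simp at hn
      omega
    obtain ⟨z, hzW, hz0⟩ := W.exists_mem_ne_zero_of_ne_bot this
    exact ⟨z, hW z hzW, hz0⟩
  obtain ⟨y, hy⟩ : ∃ y, QuadraticMap.polar Q z y ≠ 0 := by
    by_contra! h
    exact hz0 (hQ z hz h)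
  obtain ⟨w, hw, hzw⟩ : ∃ w, Q w = 0 ∧ QuadraticMap.polar Q z w = 1 := by
    obtain ⟨x, hzx⟩ : ∃ x, QuadraticMap.polar Q z x = 1 :=
      ⟨(QuadraticMap.polar Q z y)⁻¹ • y, by
        rw [QuadraticMap.polar_smul_right, smul_eq_mul, inv_mul_cancel₀ hy]⟩
    have hzz : QuadraticMap.polar Q z z = 0 := by simp [hz]
    refine ⟨x + (-Q x) • z, ?_, ?_⟩
    · rw [QuadraticMap.map_add Q, QuadraticMap.map_smul, QuadraticMap.polar_smul_right,
        QuadraticMap.polar_comm, hzx, hz]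
      simp
    · rw [QuadraticMap.polar_add_right, QuadraticMap.polar_smul_right Q, hzx, hzz]
      simp
  have hwz : QuadraticMap.polar Q w z = 1 := by rw [QuadraticMap.polar_comm, hzw]
  have hzz : QuadraticMap.polar Q z z = 0 := by simp [hz]
  have hww : QuadraticMap.polar Q w w = 0 := by simp [hw]
  let K : Submodule F V := vecPerp Q z ⊓ vecPerp Q w
  have hK : ∀ v : V, v ∈ K ↔ QuadraticMap.polar Q z v = 0 ∧ QuadraticMap.polar Q w v = 0 := by
    intro v
    simp [K, vecPerp]
  let f : F × F × K →ₗ[F] V :=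
    (LinearMap.toSpanSingleton F V z).coprod
      ((LinearMap.toSpanSingleton F V w).coprod K.subtype)
  have hf : ∀ a b k, f (a, b, k) = a • z + (b • w + (k : V)) := by
    intro a b k
    simp [f]
  have hbij : Function.Bijective f := by
    constructor
    · rw [← LinearMap.ker_eq_bot, LinearMap.ker_eq_bot']
      rintro ⟨a, b, k⟩ h
      rw [hf] at h
      obtain ⟨k, hk⟩ := k
      have hk' := (hK k).1 hk
      have hb : b = 0 := by
        have := congrArg (QuadraticMap.polar Q z) h
        simpa only [QuadraticMap.polar_add_right, QuadraticMap.polar_smul_right, hzz, hzw, hk'.1,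
          smul_zero, zero_add, smul_eq_mul, mul_zero, mul_one, add_zero,
          QuadraticMap.polar_zero_right] using this
      have ha : a = 0 := by
        have := congrArg (QuadraticMap.polar Q w) h
        simpa only [QuadraticMap.polar_add_right, QuadraticMap.polar_smul_right, hww, hwz, hk'.2,
          smul_zero, zero_add, smul_eq_mul, mul_zero, mul_one, add_zero,
          QuadraticMap.polar_zero_right] using this
      subst ha hb
      simpa using h
    · intro v
      refine ⟨(QuadraticMap.polar Q w v, QuadraticMap.polar Q z v,
        ⟨v - QuadraticMap.polar Q w v • z - QuadraticMap.polar Q z v • w, (hK _).2 ⟨?_, ?_⟩⟩), ?_⟩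
      · simp [QuadraticMap.polar_sub_right, QuadraticMap.polar_smul_right, hzw, hz]
      · simp [QuadraticMap.polar_sub_right, QuadraticMap.polar_smul_right, hwz, hw]
      · rw [hf]
        simp only
        abel
  refine ⟨K, ⟨{ LinearEquiv.ofBijective f hbij with map_app' := ?_ }⟩⟩
  rintro ⟨a, b, k⟩
  have hk := (hK k).1 k.2
  change Q (f (a, b, k)) = _
  rw [hf, QuadraticMap.map_add Q, QuadraticMap.map_add Q (b • w)]
  simp [QuadraticMap.map_smul, QuadraticMap.polar_add_right, QuadraticMap.polar_smul_right,
    QuadraticMap.polar_smul_left, hz, hw, hzw, hk.1, hk.2, mul_comm, add_comm]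

section Counting

variable {F : Type*} [Field F] [Fintype F]

lemma natCard_hyperbolicExt_zeros {V : Type*} [AddCommGroup V] [Module F V] [FiniteDimensional F V]
    (Q : QuadraticForm F V) :
    Nat.card {v // hyperbolicExt Q v = 0} + Fintype.card F ^ finrank F V =
      Fintype.card F ^ (finrank F V + 1) + Fintype.card F * Nat.card {v // Q v = 0} := by
  classical
  have : Finite V := Module.finite_of_finite F
  let E : {v // hyperbolicExt Q v = 0} ≃ ({b : F // b ≠ 0} × V) ⊕ (F × {v // Q v = 0}) :=
    { toFun := fun v => if hb : v.1.2.1 = 0 then .inr (v.1.1, ⟨v.1.2.2, by simpa [hb] using v.2⟩)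
        else .inl (⟨v.1.2.1, hb⟩, v.1.2.2)
      invFun := Sum.elim
        (fun x => ⟨(-(Q x.2) * (x.1 : F)⁻¹, x.1, x.2), by simp [x.1.2]⟩)
        (fun x => ⟨(x.1, 0, x.2), by simp [x.2.2]⟩)
      left_inv := by
        rintro ⟨⟨a, b, v⟩, h⟩
        by_cases hb : b = 0
        · simp [hb]
        · have h' : a * b + Q v = 0 := by simpa using h
          simp only [hb, dite_false, Sum.elim_inl, Subtype.mk.injEq, Prod.mk.injEq, and_true]
          field_simp
          linear_combination -h'
      right_inv := by
        rintro (⟨⟨b, hb⟩, v⟩ | ⟨a, v⟩)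
        · simp [hb]
        · simp }
  rw [Nat.card_congr E, Nat.card_sum, Nat.card_prod, Nat.card_prod,
    Nat.card_eq_fintype_card (α := F), Module.natCard_eq_pow_finrank (K := F) (V := V),
    Nat.card_eq_fintype_card (α := F)]
  have : Nat.card {b : F // b ≠ 0} + 1 = Fintype.card F := by
    rw [Nat.card_eq_fintype_card, Fintype.card_subtype_compl, Fintype.card_subtype_eq]
    have := Fintype.card_pos (α := F)
    omega
  rw [← this]
  ring

/-- The number of singular vectors of a nondegenerate quadratic form of Witt index `n` on a space
of dimension `2 n + e` is `q ^ (2 n + e - 1) + q ^ n - q ^ (n + e - 1)`. -/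
lemma natCard_zeros {V : Type*} [AddCommGroup V] [Module F V] [FiniteDimensional F V]
    {Q : QuadraticForm F V} (hQ : QuadNondeg Q) {n e : ℕ} (hn : wittIndex Q = n)
    (hd : finrank F V = 2 * n + e) :
    Fintype.card F * Nat.card {v // Q v = 0} + Fintype.card F ^ (n + e) =
      Fintype.card F ^ (2 * n + e) + Fintype.card F ^ (n + 1) := by
  induction n generalizing V with
  | zero =>
    have : Unique {v // Q v = 0} :=
      { default := ⟨0, by simp⟩
        uniq := fun v => Subtype.ext (eq_zero_of_wittIndex_eq_zero hn v.2) }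
    simp [add_comm]
  | succ n ih =>
    obtain ⟨K, ⟨φ⟩⟩ := exists_isometryEquiv_hyperbolicExt hQ (by omega)
    have hK := φ.toLinearEquiv.finrank_eq
    simp only [finrank_prod, finrank_self] at hK
    have hKd : finrank F K = 2 * n + e := by omega
    have hKw : wittIndex (Q.comp K.subtype) = n := by
      have := φ.wittIndex_eq
      rw [wittIndex_hyperbolicExt] at this
      omega
    have := ih ((quadNondeg_hyperbolicExt_iff _).1 (hQ.of_isometryEquiv φ.symm)) hKw hKd
    have h2 := natCard_hyperbolicExt_zeros (Q.comp K.subtype)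
    rw [← φ.natCard_zeros_eq]
    rw [hKd] at h2
    have e1 : 2 * (n + 1) + e = (2 * n + e) + 1 + 1 := by ring
    have e2 : n + 1 + e = n + e + 1 := by ring
    rw [e1, e2]
    simp only [pow_succ _ (2 * n + e), pow_succ _ (2 * n + e + 1), pow_succ _ (n + e),
      pow_succ _ (n + 1)] at *
    nlinarith

end Counting

section Projection

variable {F V : Type*} [Field F] [AddCommGroup V] [Module F V]

lemma finrank_map_snd_inf_le_one {G G' : Submodule F (F × F × V)} (hd : G ⊓ G' = ⊥) :
    finrank F ↥(G.map (LinearMap.snd F F (F × V)) ⊓ G'.map (LinearMap.snd F F (F × V))) ≤ 1 := by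
  by_cases hbot : G.map (LinearMap.snd F F (F × V)) ⊓ G'.map (LinearMap.snd F F (F × V)) = ⊥
  · rw [hbot, finrank_bot]
    exact zero_le_one
  obtain ⟨u, ⟨⟨⟨a, _⟩, hg, rfl⟩, ⟨⟨a', _⟩, hg', rfl⟩⟩, hu0⟩ :=
    Submodule.exists_mem_ne_zero_of_ne_bot hbot
  simp only [LinearMap.snd_apply] at *
  rename_i u
  have key : ∀ {b b' : F} {w : F × V}, (b, w) ∈ G → (b', w) ∈ G' → b = b' → w = 0 := by
    rintro b _ w h h' rfl
    have : ((b, w) : F × F × V) ∈ G ⊓ G' := ⟨h, h'⟩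
    rw [hd, Submodule.mem_bot] at this
    simpa using congrArg Prod.snd this
  have hne : a - a' ≠ 0 := fun h => hu0 (key hg hg' (sub_eq_zero.1 h))
  refine finrank_le_one ⟨u, ⟨⟨_, hg, rfl⟩, ⟨_, hg', rfl⟩⟩⟩ ?_
  rintro ⟨_, ⟨⟨b, w⟩, hw, rfl⟩, ⟨⟨b', w'⟩, hw', hww⟩⟩
  obtain rfl : w' = w := hww
  refine ⟨(b - b') / (a - a'), Subtype.ext ?_⟩
  have h1 := G.sub_mem hw (G.smul_mem ((b - b') / (a - a')) hg)
  have h2 := G'.sub_mem hw' (G'.smul_mem ((b - b') / (a - a')) hg')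
  have := key h1 h2 (by simp only [Prod.smul_fst, smul_eq_mul]; field_simp; ring)
  exact (sub_eq_zero.1 this).symm

variable [FiniteDimensional F V]

lemma IsGenerator.exists_mem_of_notMem {Q : QuadraticForm F V} {G : Submodule F (F × F × V)}
    (hG : IsGenerator (hyperbolicExt Q) G) (hz : ((1 : F), (0 : F), (0 : V)) ∉ G) :
    ∃ a v, (a, (1 : F), v) ∈ G := by
  by_contra! h
  refine hz (hG.mem_of_polar (by simp) ?_)
  rintro ⟨a, b, v⟩ hx
  by_contra hb
  have hb' : b ≠ 0 := by simpa [polar_hyperbolicExt] using hb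
  exact h (b⁻¹ * a) (b⁻¹ • v) (by simpa [hb'] using G.smul_mem b⁻¹ hx)

lemma IsGenerator.quadNondeg_shadow_sup {Q : QuadraticForm F V} {G G' : Submodule F (F × F × V)}
    (hG : IsGenerator (hyperbolicExt Q) G) (hG' : IsGenerator (hyperbolicExt Q) G')
    (hd : G ⊓ G' = ⊥) (hzG : ((1 : F), (0 : F), (0 : V)) ∉ G)
    (hz : ((1 : F), (0 : F), (0 : V)) ∈ G ⊔ G') :
    QuadNondeg (Q.comp (shadow (G ⊔ G')).subtype) := by
  rintro ⟨v, hv⟩ - hp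
  obtain ⟨α, k, hk⟩ := hG.exists_mem_of_notMem hzG
  have hk' : (α, (1 : F), k) ∈ G ⊔ G' := mem_sup_left hk
  have hp' : ∀ w ∈ shadow (G ⊔ G'), QuadraticMap.polar Q v w = 0 := fun w hw => hp ⟨w, hw⟩
  have hmem : (-QuadraticMap.polar Q v k, (0 : F), v) ∈ G ⊔ G' := by
    obtain ⟨a, ha⟩ := mem_shadow.1 hv
    simpa using (G ⊔ G').add_mem ha ((G ⊔ G').smul_mem (-QuadraticMap.polar Q v k - a) hz)
  have hrad : ∀ y ∈ G ⊔ G', QuadraticMap.polar (hyperbolicExt Q)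
      (-QuadraticMap.polar Q v k, (0 : F), v) y = 0 := by
    rintro ⟨a, b, h⟩ hy
    have h1 : h - b • k ∈ shadow (G ⊔ G') := mem_shadow.2 ⟨a - b * α, by
      simpa using (G ⊔ G').sub_mem hy ((G ⊔ G').smul_mem b hk')⟩
    have h2 := hp' _ h1
    rw [QuadraticMap.polar_sub_right, QuadraticMap.polar_smul_right, smul_eq_mul] at h2
    rw [polar_hyperbolicExt]
    linear_combination h2
  obtain ⟨g, hg, g', hg', hsum⟩ := mem_sup.1 hmem
  have e1 : g ∈ G' := by
    refine hG'.mem_of_polar (hG.1 g hg) fun y hy => ?_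
    have h1 := hrad y (mem_sup_right hy)
    rw [← hsum, QuadraticMap.polar_add_left, polar_eq_zero_of_mem hG'.1 hg' hy, add_zero] at h1
    rwa [QuadraticMap.polar_comm]
  have e2 : g' ∈ G := by
    refine hG.mem_of_polar (hG'.1 g' hg') fun y hy => ?_
    have h1 := hrad y (mem_sup_left hy)
    rw [← hsum, QuadraticMap.polar_add_left, polar_eq_zero_of_mem hG.1 hg hy, zero_add] at h1
    rwa [QuadraticMap.polar_comm]
  have z1 : g = 0 := (mem_bot F).1 (hd ▸ ⟨hg, e1⟩)
  have z2 : g' = 0 := (mem_bot F).1 (hd ▸ ⟨e2, hg'⟩)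
  simp only [z1, z2, add_zero] at hsum
  have : v = 0 := (congrArg (fun x => x.2.2) hsum).symm
  exact Subtype.ext this

end Projection

section Hyperplane

variable {F U : Type*} [Field F] [AddCommGroup U] [Module F U] {H : Submodule F U}

lemma exists_linearEquiv_prod_of_finrank [FiniteDimensional F U]
    (h : finrank F H + 1 = finrank F U) :
    ∃ c : U ≃ₗ[F] F × H, ∀ x : H, c x = (0, x) := by
  obtain ⟨L, hL⟩ := H.exists_isCompl
  have hL1 : finrank F L = finrank F F := by
    have := Submodule.finrank_add_eq_of_isCompl hL
    rw [finrank_self]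
    omega
  refine ⟨(prodEquivOfIsCompl H L hL).symm ≪≫ₗ LinearEquiv.prodComm F H L ≪≫ₗ
    (LinearEquiv.ofFinrankEq L F hL1).prodCongr (LinearEquiv.refl F H), fun x => ?_⟩
  simp

lemma mem_iff_fst_eq_zero {c : U ≃ₗ[F] F × H} (hc : ∀ x : H, c x = (0, x))
    (u : U) : u ∈ H ↔ (c u).1 = 0 := by
  refine ⟨fun hu => by rw [hc ⟨u, hu⟩], fun hu => ?_⟩
  have : u = (c u).2 := c.injective (by rw [hc]; exact Prod.ext hu rfl)
  rw [this]
  exact (c u).2.2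

lemma finrank_comap_subtype_add_one [FiniteDimensional F U]
    {c : U ≃ₗ[F] F × H} (hc : ∀ x : H, c x = (0, x))
    {S : Submodule F U} (hS : ¬ S ≤ H) :
    finrank F (S.comap H.subtype) + 1 = finrank F S := by
  have hker : LinearMap.ker (LinearMap.fst F F H ∘ₗ (c : U →ₗ[F] F × H)) = H := by
    ext u
    simp [mem_iff_fst_eq_zero hc]
  have h1 := finrank_le_finrank_inf_ker_add_one S (LinearMap.fst F F H ∘ₗ (c : U →ₗ[F] F × H))
  rw [hker] at h1
  have h2 : finrank F ↥(S ⊓ H) < finrank F S :=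
    finrank_lt_finrank_of_lt (inf_lt_left.2 hS)
  have h3 : finrank F (S.comap H.subtype) = finrank F ↥(S ⊓ H) := by
    rw [← finrank_map_subtype_eq, map_comap_subtype, inf_comm]
  omega

lemma exists_symm_mem {c : U ≃ₗ[F] F × H} (hc : ∀ x : H, c x = (0, x))
    {S : Submodule F U} (hS : ¬ S ≤ H) : ∃ h, c.symm (1, h) ∈ S := by
  obtain ⟨s, hs, hsH⟩ := SetLike.not_le_iff_exists.1 hS
  rw [mem_iff_fst_eq_zero hc] at hsH
  refine ⟨(c s).1⁻¹ • (c s).2, ?_⟩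
  convert S.smul_mem (c s).1⁻¹ hs using 1
  rw [LinearEquiv.symm_apply_eq, map_smul]
  exact Prod.ext (by simp [hsH]) rfl

end Hyperplane

section SpreadToAvsp

variable {F U : Type*} [Field F] [AddCommGroup U] [Module F U] {H : Submodule F U}

lemma comap_subtype_map_symm_map_snd {c : U ≃ₗ[F] F × H} (hc : ∀ x : H, c x = (0, x))
    (G : Submodule F (F × F × H)) :
    (G.map ((c.symm : F × H →ₗ[F] U) ∘ₗ LinearMap.snd F F (F × H))).comap H.subtype =
      shadow G := by
  ext x
  simp only [mem_comap, subtype_apply, mem_map, LinearMap.comp_apply, LinearMap.snd_apply,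
    LinearEquiv.coe_coe, LinearEquiv.symm_apply_eq, hc, mem_shadow, Prod.exists]
  constructor
  · rintro ⟨a, b, v, h, he⟩
    exact ⟨a, he ▸ h⟩
  · rintro ⟨a, h⟩
    exact ⟨a, 0, x, h, rfl⟩

variable [FiniteDimensional F U] [Fintype F]

/-- A partition of the vectors outside a hyperplane `H` by subspaces which all have the same
dimension has the expected number of members. -/
lemma ncard_mul_pow_of_existsUnique {c : U ≃ₗ[F] F × H} (hc : ∀ x : H, c x = (0, x))
    {P : Set (Submodule F U)} {n : ℕ} (hn : ∀ S ∈ P, finrank F (S.comap H.subtype) = n)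
    (hP : ∀ S ∈ P, ¬ S ≤ H) (hu : ∀ u, u ∉ H → ∃! S, S ∈ P ∧ u ∈ S) :
    P.ncard * Fintype.card F ^ n = Fintype.card F ^ finrank F H := by
  classical
  have : Finite U := Module.finite_of_finite F
  have : Finite (Submodule F U) := Finite.of_injective _ SetLike.coe_injective
  have : Fintype P := Fintype.ofFinite P
  have hmem : ∀ h : H, c.symm (1, h) ∉ H := fun h => by simp [mem_iff_fst_eq_zero hc]
  let E : (Σ S : P, {h : H // c.symm (1, h) ∈ S.1}) → H := fun x => x.2.1
  have hE : Function.Bijective E := by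
    constructor
    · rintro ⟨S, h⟩ ⟨T, k⟩ hk
      have hk' : h.1 = k.1 := hk
      have : S = T := Subtype.ext <| (hu _ (hmem h)).unique ⟨S.2, h.2⟩
        ⟨T.2, by rw [hk']; exact k.2⟩
      subst this
      rw [Subtype.ext hk']
    · intro h
      obtain ⟨S, ⟨hS, hhS⟩, -⟩ := hu _ (hmem h)
      exact ⟨⟨⟨S, hS⟩, ⟨h, hhS⟩⟩, rfl⟩
  have hcard : ∀ S : P, Nat.card {h : H // c.symm (1, h) ∈ S.1} = Fintype.card F ^ n := by
    intro S
    obtain ⟨h₀, hh₀⟩ := exists_symm_mem hc (hP S S.2)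
    have e : {h : H // c.symm (1, h) ∈ S.1} ≃ S.1.comap H.subtype := by
      refine (Equiv.subRight h₀).subtypeEquiv fun h => ?_
      have : ((h - h₀ : H) : U) = c.symm (1, h) - c.symm (1, h₀) := by
        rw [← map_sub, LinearEquiv.eq_symm_apply, hc]
        simp
      simp only [mem_comap, subtype_apply, Equiv.subRight_apply, this]
      exact (S.1.sub_mem_iff_left hh₀).symm
    rw [Nat.card_congr e, Module.natCard_eq_pow_finrank (K := F), hn S S.2,
      Nat.card_eq_fintype_card]
  have := Nat.card_eq_of_bijective E hE
  rw [Nat.card_sigma, Finset.sum_congr rfl (fun S _ => hcard S), Finset.sum_const,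
    Module.natCard_eq_pow_finrank (K := F) (V := H), Nat.card_eq_fintype_card (α := F),
    Finset.card_univ, ← Nat.card_eq_fintype_card, Nat.card_coe_set_eq, smul_eq_mul] at this
  exact this

lemma IsSpread.exists_isAvsp {c : U ≃ₗ[F] F × H} (hc : ∀ x : H, c x = (0, x))
    {Q : QuadraticForm F H} {e r : ℕ} (hr : finrank F H = r + 1)
    (hw : finrank F H = 2 * wittIndex Q + e) (h2 : 2 ≤ wittIndex Q)
    {𝒮 : Set (Submodule F (F × F × H))} (h𝒮 : IsSpread (hyperbolicExt Q) 𝒮) :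
    ∃ Pgen P, IsGenerator Q Pgen ∧ IsAvsp e r H Q Pgen P := by
  obtain ⟨hgen, hdisj, hcov⟩ := h𝒮
  obtain ⟨G₀, hG₀, hz₀⟩ := hcov (1, 0, 0) (by simp)
  set ρ : F × F × H →ₗ[F] U := (c.symm : F × H →ₗ[F] U) ∘ₗ LinearMap.snd F F (F × H) with hρ
  have hρc : ∀ v, c (ρ v) = v.2 := fun v => by simp [ρ]
  have hker : ∀ v, ρ v = 0 → v = v.1 • ((1 : F), (0 : F), (0 : H)) := by
    rintro ⟨a, b, v⟩ h
    have := hρc (a, b, v)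
    rw [h, map_zero] at this
    simpa using this.symm
  -- properties of a single spread member not containing the distinguished point
  have hrank : ∀ G ∈ 𝒮, ((1 : F), (0 : F), (0 : H)) ∉ G →
      finrank F (G.map ρ) = wittIndex Q + 1 := by
    intro G hG hz
    rw [← wittIndex_hyperbolicExt, ← (hgen G hG).2]
    rw [← LinearMap.range_domRestrict]
    apply LinearMap.finrank_range_of_inj
    rw [← LinearMap.ker_eq_bot, LinearMap.ker_eq_bot']
    rintro ⟨v, hv⟩ h
    have h1 := hker v h
    by_cases ha : v.1 = 0
    · exact Subtype.ext (h1.trans (by rw [ha, zero_smul]; rfl))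
    · refine (hz ?_).elim
      rw [h1] at hv
      exact (G.smul_mem_iff ha).1 hv
  have hnle : ∀ G ∈ 𝒮, ((1 : F), (0 : F), (0 : H)) ∉ G → ¬ G.map ρ ≤ H := by
    intro G hG hz hle
    obtain ⟨a, v, h⟩ := (hgen G hG).exists_mem_of_notMem hz
    have := (mem_iff_fst_eq_zero hc _).1 (hle ⟨_, h, rfl⟩)
    simp [hρc] at this
  have hinf : ∀ G ∈ 𝒮, ∀ G' ∈ 𝒮, G ≠ G' → finrank F ↥(G.map ρ ⊓ G'.map ρ) ≤ 1 := by
    intro G hG G' hG' hne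
    rw [hρ, map_comp, map_comp, ← Submodule.map_inf _ c.symm.injective,
      LinearEquiv.finrank_map_eq]
    exact finrank_map_snd_inf_le_one (hdisj G hG G' hG' hne)
  have hinj : ∀ {x y : F} {w : F × H}, hyperbolicExt Q (x, w) = 0 → hyperbolicExt Q (y, w) = 0 →
      w.1 ≠ 0 → x = y := by
    intro x y w hx hy hw
    simp only [hyperbolicExt_apply] at hx hy
    exact mul_right_cancel₀ hw (by linear_combination hx - hy)
  have hvec : ∀ u, u ∉ H →
      ∃! S, S ∈ {S | ∃ G ∈ 𝒮, ((1 : F), (0 : F), (0 : H)) ∉ G ∧ G.map ρ = S} ∧ u ∈ S := by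
    intro u hu
    rw [mem_iff_fst_eq_zero hc] at hu
    have hv : hyperbolicExt Q (-(Q (c u).2) * (c u).1⁻¹, c u) = 0 := by
      simp [hu]
    obtain ⟨G, hG, hvG⟩ := hcov _ hv
    refine ⟨G.map ρ, ⟨⟨G, hG, fun hz => hu ?_, rfl⟩, ⟨_, hvG, by simp [ρ]⟩⟩, ?_⟩
    · exact (hgen G hG).1.snd_fst_eq_zero hz hvG
    · rintro _ ⟨⟨G', hG', hz', rfl⟩, ⟨⟨a, w⟩, hw, rfl⟩⟩
      by_contra hne
      have hne' : G' ≠ G := fun h => hne (h ▸ rfl)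
      rw [hρc] at hvG hu hv
      have := hinj ((hgen G' hG').1 _ hw) hv hu
      have hmem : ((a, w) : F × F × H) ∈ G' ⊓ G := ⟨hw, this ▸ hvG⟩
      rw [hdisj G' hG' G hG hne', mem_bot] at hmem
      exact hu (congrArg (fun x => x.2.1) hmem)
  have hcomap : ∀ G : Submodule F (F × F × H), (G.map ρ).comap H.subtype = shadow G :=
    comap_subtype_map_symm_map_snd hc
  have hslice : ∀ (S T : Submodule F U), finrank F ↥(S.comap H.subtype ⊓ T.comap H.subtype) ≤
      finrank F ↥(S ⊓ T) := by
    intro S T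
    rw [← comap_inf, ← finrank_map_subtype_eq, map_comap_subtype]
    exact finrank_mono inf_le_right
  refine ⟨shadow G₀, {S | ∃ G ∈ 𝒮, ((1 : F), (0 : F), (0 : H)) ∉ G ∧ G.map ρ = S},
    (hgen G₀ hG₀).shadow, ?_, ?_, ?_, ?_, ?_, ?_, ?_⟩
  · have hm := ncard_mul_pow_of_existsUnique (n := wittIndex Q) hc
      (P := {S | ∃ G ∈ 𝒮, ((1 : F), (0 : F), (0 : H)) ∉ G ∧ G.map ρ = S})
      (by rintro _ ⟨G, hG, hz, rfl⟩
          rw [hcomap]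
          exact (hgen G hG).shadow.2)
      (by rintro _ ⟨G, hG, hz, rfl⟩
          exact hnle G hG hz) hvec
    have e1 : finrank F H = (r + e + 1) / 2 + wittIndex Q := by omega
    rw [e1, pow_add] at hm
    exact Nat.eq_of_mul_eq_mul_right (pow_pos Fintype.card_pos _) hm
  · rintro _ ⟨G, hG, hz, rfl⟩
    exact ⟨by rw [hrank G hG hz]; omega, hnle G hG hz⟩
  · intro L hL hLH
    obtain ⟨⟨u, hu⟩, -, hspan⟩ := finrank_eq_one_iff'.1 hL
    obtain rfl : L = span F {u} := by
      refine le_antisymm (fun w hw => ?_) ((span_singleton_le_iff_mem _ _).2 hu)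
      obtain ⟨t, ht⟩ := hspan ⟨w, hw⟩
      exact mem_span_singleton.2 ⟨t, congrArg Subtype.val ht⟩
    simp only [span_singleton_le_iff_mem] at hLH ⊢
    exact hvec u hLH
  · rintro _ ⟨G, hG, hz, rfl⟩
    rw [hcomap]
    refine ⟨(hgen G hG).shadow, eq_bot_iff.2 ?_⟩
    rintro v ⟨h1, h2⟩
    obtain ⟨a, ha⟩ := mem_shadow.1 h1
    obtain ⟨b, hb⟩ := mem_shadow.1 h2
    have hne : G ≠ G₀ := fun h => hz (h ▸ hz₀)
    have : (a, (0 : F), v) ∈ G ⊓ G₀ :=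
      ⟨ha, by simpa using G₀.add_mem hb (G₀.smul_mem (a - b) hz₀)⟩
    rw [hdisj G hG G₀ hG₀ hne, mem_bot] at this
    exact congrArg (fun x => x.2.2) this
  · rintro _ ⟨G, hG, hz, rfl⟩ _ ⟨G', hG', hz', rfl⟩ hne heq
    have hne' : G ≠ G' := fun h => hne (h ▸ rfl)
    have h1 := hslice (G.map ρ) (G'.map ρ)
    have h3 := hinf G hG G' hG' hne'
    rw [← heq, inf_idem, hcomap, (hgen G hG).shadow.2] at h1
    omega
  · rintro _ ⟨G, hG, hz, rfl⟩ _ ⟨G', hG', hz', rfl⟩ hne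
    exact hinf G hG G' hG' fun h => hne (h ▸ rfl)
  · rintro _ ⟨G, hG, hz, rfl⟩ _ ⟨G', hG', hz', rfl⟩ hne hone
    have hne' : G ≠ G' := fun h => hne (h ▸ rfl)
    have hle : shadow G ≤ shadow (G ⊔ G') := by
      intro v hv
      obtain ⟨a, ha⟩ := mem_shadow.1 hv
      exact mem_shadow.2 ⟨a, mem_sup_left ha⟩
    have h1 := hslice (G.map ρ) (G'.map ρ)
    have h3 := hinf G hG G' hG' hne'
    have h4 := finrank_sup_add_finrank_inf_eq (G.map ρ) (G'.map ρ)
    rw [hrank G hG hz, hrank G' hG' hz'] at h4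
    have h5 := finrank_comap_subtype_add_one hc (S := G.map ρ ⊔ G'.map ρ)
      fun h => hnle G hG hz (le_sup_left.trans h)
    rw [← Submodule.map_sup, hcomap] at h5 ⊢
    rw [← Submodule.map_sup] at h4
    refine ⟨?_, ?_⟩
    · refine (hgen G hG).quadNondeg_shadow_sup (hgen G' hG') (hdisj G hG G' hG' hne') hz ?_
      obtain ⟨v, hv, hv0⟩ := exists_mem_ne_zero_of_ne_bot
        (p := shadow G ⊓ shadow G') (by
          intro h
          rw [hcomap, hcomap, h, finrank_bot] at hone
          exact zero_ne_one hone)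
      obtain ⟨a, ha⟩ := mem_shadow.1 hv.1
      obtain ⟨b, hb⟩ := mem_shadow.1 hv.2
      have hab : a - b ≠ 0 := by
        intro hab
        obtain rfl := sub_eq_zero.1 hab
        have : (a, (0 : F), v) ∈ G ⊓ G' := ⟨ha, hb⟩
        rw [hdisj G hG G' hG' hne', mem_bot] at this
        exact hv0 (congrArg (fun x => x.2.2) this)
      have := (G ⊔ G').smul_mem (a - b)⁻¹ ((G ⊔ G').sub_mem (mem_sup_left ha) (mem_sup_right hb))
      convert this using 1
      exact Prod.ext (by simp [hab]) (by simp)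
    · rw [(hgen G hG).shadow.wittIndex_restrict hle]
      omega

end SpreadToAvsp

section AvspToSpread

section Lift

variable {F V : Type*} [Field F] [AddCommGroup V] [Module F V]

/-- The linear map lifting each vector `(1, h₀ + x)` with `Q x = 0` to the unique singular vector of
`hyperbolicExt Q` above it. -/
def singularLift (Q : QuadraticForm F V) (h₀ : V) : F × V →ₗ[F] F × F × V :=
  (Q h₀ • LinearMap.fst F F V - QuadraticMap.polarBilin Q h₀ ∘ₗ LinearMap.snd F F V).prod
    LinearMap.id

@[simp]
lemma singularLift_apply (Q : QuadraticForm F V) (h₀ : V) (w : F × V) :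
    singularLift Q h₀ w = (Q h₀ * w.1 - QuadraticMap.polar Q h₀ w.2, w) := by
  simp [singularLift]

lemma hyperbolicExt_singularLift {Q : QuadraticForm F V} {h₀ : V} {w : F × V}
    (hw : Q (w.2 - w.1 • h₀) = 0) : hyperbolicExt Q (singularLift Q h₀ w) = 0 := by
  obtain ⟨b, h⟩ := w
  simp only [sub_eq_add_neg, ← neg_smul] at hw
  rw [QuadraticMap.map_add Q, QuadraticMap.map_smul, QuadraticMap.polar_smul_right,
    QuadraticMap.polar_comm] at hw
  simp only [smul_eq_mul] at hw
  simp only [singularLift_apply, hyperbolicExt_apply]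
  linear_combination hw

end Lift

variable {F U : Type*} [Field F] [AddCommGroup U] [Module F U] {H : Submodule F U}

lemma mem_sub_smul_of_symm_mem {c : U ≃ₗ[F] F × H} (hc : ∀ x : H, c x = (0, x))
    {S : Submodule F U} {h₀ : H} (h₀S : c.symm (1, h₀) ∈ S) {w : F × H} (hw : c.symm w ∈ S) :
    w.2 - w.1 • h₀ ∈ S.comap H.subtype := by
  have : ((w.2 - w.1 • h₀ : H) : U) = c.symm w - w.1 • c.symm (1, h₀) := by
    rw [← map_smul, ← map_sub, LinearEquiv.eq_symm_apply, hc]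
    exact Prod.ext (by simp) (by simp)
  rw [mem_comap, subtype_apply, this]
  exact S.sub_mem hw (S.smul_mem _ h₀S)

variable [Fintype F]

lemma IsAvsp.existsUnique_mem {Q : QuadraticForm F H} {Pgen : Submodule F H}
    {P : Set (Submodule F U)} {e r : ℕ} (hP : IsAvsp e r H Q Pgen P) {u : U} (hu : u ∉ H) :
    ∃! S, S ∈ P ∧ u ∈ S := by
  have hu0 : u ≠ 0 := fun h => hu (h ▸ H.zero_mem)
  simpa only [span_singleton_le_iff_mem] using hP.2.2.1 (span F {u}) (finrank_span_singleton hu0)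
    (by rwa [span_singleton_le_iff_mem])

variable [FiniteDimensional F U]

/-- The lifts of two distinct members of an avsp meet trivially. -/
lemma IsAvsp.map_singularLift_inf_eq_bot {c : U ≃ₗ[F] F × H} (hc : ∀ x : H, c x = (0, x))
    {Q : QuadraticForm F H} {Pgen : Submodule F H}
    {P : Set (Submodule F U)} {e r : ℕ} (hP : IsAvsp e r H Q Pgen P) {S T : Submodule F U}
    (hS : S ∈ P) (hT : T ∈ P) (hne : S ≠ T) {s t : H} (hs : c.symm (1, s) ∈ S)
    (ht : c.symm (1, t) ∈ T) {v : F × F × H} (hvS : c.symm v.2 ∈ S) (hvT : c.symm v.2 ∈ T)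
    (hv1 : v = singularLift Q s v.2) (hv2 : v = singularLift Q t v.2) : v = 0 := by
  have hts : ∀ S ∈ P, IsTotallySingular Q (S.comap H.subtype) := fun S hS => (hP.2.2.2.1 S hS).1.1
  obtain ⟨a, b, p⟩ := v
  simp only at hvS hvT hv1 hv2
  by_cases hb : b = 0
  swap
  · refine (hne ((hP.existsUnique_mem (u := c.symm (b, p)) ?_).unique ⟨hS, hvS⟩ ⟨hT, hvT⟩)).elim
    simpa [mem_iff_fst_eq_zero hc] using hb
  subst hb
  have h1 : a = -QuadraticMap.polar Q s p := by simpa using congrArg Prod.fst hv1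
  have h2 : a = -QuadraticMap.polar Q t p := by simpa using congrArg Prod.fst hv2
  suffices hp : p = 0 by subst hp; simp [h1]
  by_contra hp0
  have hpS : p ∈ S.comap H.subtype := by simpa using mem_sub_smul_of_symm_mem hc hs hvS
  have hpT : p ∈ T.comap H.subtype := by simpa using mem_sub_smul_of_symm_mem hc ht hvT
  have hone : finrank F ↥(S.comap H.subtype ⊓ T.comap H.subtype) = 1 := by
    refine le_antisymm ?_ (one_le_finrank_iff.2 ?_)
    · rw [← comap_inf, ← finrank_map_subtype_eq, map_comap_subtype]
      exact (finrank_mono inf_le_right).trans (hP.2.2.2.2.2.1 S hS T hT hne)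
    · exact (Submodule.ne_bot_iff _).2 ⟨p, ⟨hpS, hpT⟩, hp0⟩
  have hnd := (hP.2.2.2.2.2.2 S hS T hT hne hone).1
  have hpM : p ∈ (S ⊔ T).comap H.subtype := (mem_sup_left hpS : (p : U) ∈ S ⊔ T)
  refine hp0 (congrArg Subtype.val (hnd ⟨p, hpM⟩ (hts S hS p hpS) ?_))
  rintro ⟨x, hx⟩
  change QuadraticMap.polar Q p x = 0
  obtain ⟨y, hy, z, hz, hyz⟩ := mem_sup.1 hx
  have hy' := polar_eq_zero_of_mem (hts S hS) hpS
    (mem_sub_smul_of_symm_mem hc hs (w := c y) (by simpa using hy))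
  have hz' := polar_eq_zero_of_mem (hts T hT) hpT
    (mem_sub_smul_of_symm_mem hc ht (w := c z) (by simpa using hz))
  have hcx : c y + c z = (0, x) := by
    rw [← map_add, hyz]
    exact hc x
  have hb : (c y).1 + (c z).1 = 0 := congrArg Prod.fst hcx
  have hxs : x = (c y).2 + (c z).2 := (congrArg Prod.snd hcx).symm
  rw [QuadraticMap.polar_sub_right, QuadraticMap.polar_smul_right, smul_eq_mul,
    QuadraticMap.polar_comm Q p s] at hy'
  rw [QuadraticMap.polar_sub_right, QuadraticMap.polar_smul_right, smul_eq_mul,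
    QuadraticMap.polar_comm Q p t] at hz'
  rw [hxs, QuadraticMap.polar_add_right]
  linear_combination hy' + hz' - (c z).1 * (h1 - h2) - a * hb +
    ((c y).1 + (c z).1) * h1

lemma IsAvsp.exists_isSpread {c : U ≃ₗ[F] F × H} (hc : ∀ x : H, c x = (0, x))
    {Q : QuadraticForm F H} {Pgen : Submodule F H} {P : Set (Submodule F U)} {e r : ℕ}
    (hr : finrank F H = r + 1) (hQ : QuadNondeg Q)
    (hw : finrank F H = 2 * wittIndex Q + e) (hPgen : IsGenerator Q Pgen)
    (hP : IsAvsp e r H Q Pgen P) : ∃ 𝒮, IsSpread (hyperbolicExt Q) 𝒮 := by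
  classical
  have hpt : ∀ S, ∃ h, S ∈ P → c.symm (1, h) ∈ S := by
    intro S
    by_cases hS : S ∈ P
    · obtain ⟨h, hh⟩ := exists_symm_mem hc (hP.2.1 S hS).2
      exact ⟨h, fun _ => hh⟩
    · exact ⟨0, fun h => (hS h).elim⟩
  choose pt hpt using hpt
  have hgenS : ∀ S ∈ P, IsGenerator Q (S.comap H.subtype) := fun S hS => (hP.2.2.2.1 S hS).1
  let lift : Submodule F U → Submodule F (F × F × H) := fun S =>
    S.map (singularLift Q (pt S) ∘ₗ (c : U →ₗ[F] F × H))
  have hlift : ∀ S v, v ∈ lift S ↔ c.symm v.2 ∈ S ∧ v = singularLift Q (pt S) v.2 := by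
    intro S v
    constructor
    · rintro ⟨u, hu, rfl⟩
      simpa using hu
    · rintro ⟨h1, h2⟩
      exact ⟨_, h1, by simpa using h2.symm⟩
  have hliftgen : ∀ S ∈ P, IsGenerator (hyperbolicExt Q) (lift S) := by
    intro S hS
    refine ⟨fun v hv => ?_, ?_⟩
    · obtain ⟨h1, h2⟩ := (hlift S v).1 hv
      rw [h2]
      exact hyperbolicExt_singularLift
        ((hgenS S hS).1 _ (mem_sub_smul_of_symm_mem hc (hpt S hS) h1))
    · rw [wittIndex_hyperbolicExt, ← (hgenS S hS).2,
        finrank_comap_subtype_add_one hc (hP.2.1 S hS).2]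
      refine (LinearEquiv.finrank_eq (Submodule.equivMapOfInjective _ (fun x y hxy => ?_) S)).symm
      exact c.injective (by simpa using congrArg Prod.snd hxy)
  have hliftdisj : ∀ S ∈ P, ∀ T ∈ P, S ≠ T → lift S ⊓ lift T = ⊥ := by
    intro S hS T hT hne
    refine eq_bot_iff.2 ?_
    rintro v ⟨h1, h2⟩
    obtain ⟨h1, h1'⟩ := (hlift S v).1 h1
    obtain ⟨h2, h2'⟩ := (hlift T v).1 h2
    exact hP.map_singularLift_inf_eq_bot hc hS hT hne (hpt S hS) (hpt T hT) h1 h2 h1' h2'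
  let G₀ : Submodule F (F × F × H) := (⊤ : Submodule F F).prod ((⊥ : Submodule F F).prod Pgen)
  have hG₀mem : ∀ v, v ∈ G₀ ↔ v.2.1 = 0 ∧ v.2.2 ∈ Pgen := by
    intro v
    exact ⟨fun h => h.2, fun h => ⟨trivial, h⟩⟩
  have hliftzero : ∀ S ∈ P, ∀ a h, (a, (0 : F), h) ∈ lift S ↔
      h ∈ S.comap H.subtype ∧ a = -QuadraticMap.polar Q (pt S) h := by
    intro S hS a h
    rw [hlift]
    have : c.symm (0, h) = h := by rw [LinearEquiv.symm_apply_eq, hc]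
    simp [this]
  have hG₀disj : ∀ S ∈ P, lift S ⊓ G₀ = ⊥ := by
    intro S hS
    refine eq_bot_iff.2 ?_
    rintro ⟨a, b, h⟩ ⟨h1, h2⟩
    obtain ⟨hb, hh⟩ := (hG₀mem _).1 h2
    simp only at hb hh
    subst hb
    obtain ⟨h3, h4⟩ := (hliftzero S hS a h).1 h1
    have : h ∈ S.comap H.subtype ⊓ Pgen := ⟨h3, hh⟩
    rw [(hP.2.2.2.1 S hS).2, mem_bot] at this
    subst this
    simp [h4]
  refine ⟨insert G₀ (lift '' P), ?_, ?_, ?_⟩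
  · rintro _ (rfl | ⟨S, hS, rfl⟩)
    · exact hPgen.hyperbolicExt
    · exact hliftgen S hS
  · rintro _ (rfl | ⟨S, hS, rfl⟩) _ (rfl | ⟨T, hT, rfl⟩) hne
    · exact (hne rfl).elim
    · rw [inf_comm]
      exact hG₀disj T hT
    · exact hG₀disj S hS
    · exact hliftdisj S hS T hT fun h => hne (h ▸ rfl)
  · rintro ⟨a, b, h⟩ hv
    by_cases hb : b = 0
    swap
    · obtain ⟨S, ⟨hS, hmem⟩, -⟩ := hP.existsUnique_mem (u := c.symm (b, h))
        (by simpa [mem_iff_fst_eq_zero hc] using hb)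
      refine ⟨lift S, Or.inr ⟨S, hS, rfl⟩, (hlift S _).2 ⟨hmem, ?_⟩⟩
      have := hyperbolicExt_singularLift
        ((hgenS S hS).1 _ (mem_sub_smul_of_symm_mem hc (hpt S hS) hmem))
      rw [singularLift_apply, hyperbolicExt_apply] at this
      rw [hyperbolicExt_apply] at hv
      rw [singularLift_apply]
      refine Prod.ext ?_ rfl
      simp only at this hv ⊢
      exact mul_right_cancel₀ hb (by linear_combination hv - this)
    · subst hb
      have hQh : Q h = 0 := by simpa using hv
      have : Finite U := Module.finite_of_finite F
      have : Finite (Submodule F U) := Finite.of_injective _ SetLike.coe_injective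
      have : Fintype P := Fintype.ofFinite P
      let Ψ : (F × Pgen) ⊕ (Σ S : P, {p : S.1.comap H.subtype // p ≠ 0}) →
          F × {h : H // Q h = 0} :=
        Sum.elim (fun x => (x.1, ⟨x.2, hPgen.1 _ x.2.2⟩))
          (fun x => (-QuadraticMap.polar Q (pt x.1) (x.2.1 : H),
            ⟨x.2.1, (hgenS x.1 x.1.2).1 _ x.2.1.2⟩))
      have hΨl : ∀ x, ((Ψ (.inl x)).1, (0 : F), ((Ψ (.inl x)).2 : H)) ∈ G₀ := fun x =>
        (hG₀mem _).2 ⟨rfl, x.2.2⟩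
      have hΨr : ∀ x, ((Ψ (.inr x)).1, (0 : F), ((Ψ (.inr x)).2 : H)) ∈ lift x.1 := fun x =>
        (hliftzero x.1 x.1.2 _ _).2 ⟨x.2.1.2, rfl⟩
      have hΨ0 : ∀ x, ((Ψ (.inr x)).2 : H) ≠ 0 := fun x h => x.2.2 (Subtype.ext h)
      have hinj : Function.Injective Ψ := by
        have aux : ∀ x y, Ψ (.inl x) ≠ Ψ (.inr y) := by
          intro x y hxy
          have h1 := hΨl x
          rw [hxy] at h1
          have h2 : _ ∈ lift y.1 ⊓ G₀ := ⟨hΨr y, h1⟩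
          rw [hG₀disj y.1 y.1.2, mem_bot] at h2
          exact hΨ0 y (congrArg (fun x => x.2.2) h2)
        rintro (⟨x, p⟩ | ⟨S, p⟩) (⟨y, p'⟩ | ⟨T, p'⟩) hxy
        · have h1 : x = y := congrArg Prod.fst hxy
          have h2 : p = p' := Subtype.ext (congrArg (fun x => (x.2 : H)) hxy)
          rw [h1, h2]
        · exact (aux _ _ hxy).elim
        · exact (aux _ _ hxy.symm).elim
        · have hST : S = T := by
            by_contra hne
            have h1 := hΨr ⟨T, p'⟩
            rw [← hxy] at h1
            have h2 : _ ∈ lift S ⊓ lift T := ⟨hΨr ⟨S, p⟩, h1⟩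
            rw [hliftdisj S S.2 T T.2 fun h => hne (Subtype.ext h), mem_bot] at h2
            exact hΨ0 ⟨S, p⟩ (congrArg (fun x => x.2.2) h2)
          subst hST
          have : (p.1 : H) = p'.1 := congrArg (fun x => (x.2 : H)) hxy
          rw [Subtype.ext (Subtype.ext this)]
      have hcard : Nat.card (F × {h : H // Q h = 0}) ≤
          Nat.card ((F × Pgen) ⊕ (Σ S : P, {p : S.1.comap H.subtype // p ≠ 0})) := by
        have hnz : ∀ S : P, Nat.card {p : S.1.comap H.subtype // p ≠ 0} =
            Fintype.card F ^ wittIndex Q - 1 := by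
          intro S
          have := Fintype.ofFinite (S.1.comap H.subtype)
          rw [← (hgenS S S.2).2, ← Nat.card_eq_fintype_card (α := F),
            ← Module.natCard_eq_pow_finrank, Nat.card_eq_fintype_card, Nat.card_eq_fintype_card,
            Fintype.card_subtype_compl, Fintype.card_subtype_eq]
        have hcount := natCard_zeros hQ rfl hw
        rw [Nat.card_sum, Nat.card_prod, Nat.card_prod, Nat.card_sigma,
          Finset.sum_congr rfl (fun S _ => hnz S), Finset.sum_const, Finset.card_univ,
          ← Nat.card_eq_fintype_card, Nat.card_coe_set_eq, hP.1,
          Module.natCard_eq_pow_finrank (K := F) (V := Pgen), hPgen.2,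
          Nat.card_eq_fintype_card (α := F), smul_eq_mul]
        have e1 : (r + e + 1) / 2 = wittIndex Q + e := by omega
        have hpos : 1 ≤ Fintype.card F ^ wittIndex Q := Nat.one_le_pow _ _ Fintype.card_pos
        rw [e1, Nat.mul_sub, mul_one]
        have e2 : Fintype.card F ^ (wittIndex Q + e) ≤
            Fintype.card F ^ (wittIndex Q + e) * Fintype.card F ^ wittIndex Q :=
          Nat.le_mul_of_pos_right _ hpos
        have e3 : Fintype.card F ^ (wittIndex Q + e) * Fintype.card F ^ wittIndex Q =
            Fintype.card F ^ (2 * wittIndex Q + e) := by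
          rw [← pow_add]
          congr 1
          omega
        rw [pow_succ'] at hcount
        omega
      obtain ⟨x, hx⟩ := (hinj.bijective_of_nat_card_le hcard).2 (a, ⟨h, hQh⟩)
      have e1 : a = (Ψ x).1 := by rw [hx]
      have e2 : h = (Ψ x).2 := by rw [hx]
      rw [e1, e2]
      rcases x with x | x
      · exact ⟨G₀, Or.inl rfl, hΨl x⟩
      · exact ⟨lift x.1, Or.inr ⟨x.1, x.1.2, rfl⟩, hΨr x⟩

end AvspToSpread

/-- An isometry of quadratic spaces extends to their hyperbolic extensions. -/
def QuadraticMap.IsometryEquiv.hyperbolicExt {F V W : Type*} [Field F] [AddCommGroup V] [Module F V]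
    [AddCommGroup W] [Module F W] {Q : QuadraticForm F V} {Q' : QuadraticForm F W}
    (φ : Q.IsometryEquiv Q') :
    (_root_.hyperbolicExt Q).IsometryEquiv (_root_.hyperbolicExt Q') where
  toLinearEquiv :=
    (LinearEquiv.refl F F).prodCongr ((LinearEquiv.refl F F).prodCongr φ.toLinearEquiv)
  map_app' := by
    rintro ⟨a, b, v⟩
    have := φ.map_app v
    simp only [hyperbolicExt_apply]
    exact congrArg (fun x => a * b + x) this

/-- A linear equivalence is an isometry from the form it pulls back. -/
def isometryEquivComp {F V W : Type*} [Field F] [AddCommGroup V] [Module F V]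
    [AddCommGroup W] [Module F W] (Q : QuadraticForm F W) (ψ : V ≃ₗ[F] W) :
    (Q.comp (ψ : V →ₗ[F] W)).IsometryEquiv Q where
  toLinearEquiv := ψ
  map_app' := fun _ => rfl

theorem avsp_iff_spread {F : Type*} [Field F] [Fintype F] (e r : ℕ)
    (he : e = 0 ∨ e = 1 ∨ e = 2) (hre : e + 3 ≤ r) (hmod : r % 2 = (e + 1) % 2) :
    (∃ (H : Submodule F (Fin (r + 2) → F)) (Q : QuadraticForm F ↥H)
        (Pgen : Submodule F ↥H) (P : Set (Submodule F (Fin (r + 2) → F))),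
      Module.finrank F ↥H = r + 1 ∧ QuadNondeg Q ∧
      Module.finrank F ↥H = 2 * wittIndex Q + e ∧
      IsGenerator Q Pgen ∧ IsAvsp e r H Q Pgen P) ↔
    (∃ Q' : QuadraticForm F (Fin (r + 3) → F),
      QuadNondeg Q' ∧
      Module.finrank F (Fin (r + 3) → F) = 2 * wittIndex Q' + e ∧
      ∃ S : Set (Submodule F (Fin (r + 3) → F)), IsSpread Q' S) := by
  have hfin : finrank F (Fin (r + 2) → F) = r + 2 := by simp
  constructor
  · rintro ⟨H, Q, Pgen, P, hr, hQ, hw, hPgen, hP⟩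
    obtain ⟨c, hc⟩ := exists_linearEquiv_prod_of_finrank (H := H) (by rw [hr, hfin])
    obtain ⟨𝒮, h𝒮⟩ := hP.exists_isSpread hc hr hQ hw hPgen
    let ψ : (Fin (r + 3) → F) ≃ₗ[F] F × F × H := LinearEquiv.ofFinrankEq _ _ (by
      rw [finrank_prod, finrank_prod, hr, finrank_self, finrank_fin_fun]; omega)
    let φ := isometryEquivComp (hyperbolicExt Q) ψ
    refine ⟨_, ((quadNondeg_hyperbolicExt_iff Q).2 hQ).of_isometryEquiv φ.symm, ?_, _,
      h𝒮.map_isometryEquiv φ.symm⟩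
    rw [φ.wittIndex_eq, wittIndex_hyperbolicExt, finrank_fin_fun]
    omega
  · rintro ⟨Q', hQ', hw, 𝒮, h𝒮⟩
    rw [finrank_fin_fun] at hw
    obtain ⟨K, ⟨φ⟩⟩ := exists_isometryEquiv_hyperbolicExt hQ' (by omega)
    have hK : finrank F K = r + 1 := by
      have := φ.toLinearEquiv.finrank_eq
      rw [finrank_prod, finrank_prod, finrank_self, finrank_fin_fun] at this
      omega
    obtain ⟨H, hr⟩ : ∃ H : Submodule F (Fin (r + 2) → F), finrank F H = r + 1 :=
      ⟨LinearMap.range (LinearMap.funLeft F F (Fin.predAbove (0 : Fin (r + 1)))), by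
        rw [LinearMap.finrank_range_of_inj (LinearMap.funLeft_injective_of_surjective _ _ _
          (Fin.predAbove_surjective 0)), finrank_fin_fun]⟩
    let θ : H ≃ₗ[F] K := LinearEquiv.ofFinrankEq _ _ (by rw [hr, hK])
    let φ' := (isometryEquivComp (Q'.comp K.subtype) θ).hyperbolicExt.trans φ
    have hwQ := φ'.wittIndex_eq
    rw [wittIndex_hyperbolicExt] at hwQ
    obtain ⟨c, hc⟩ := exists_linearEquiv_prod_of_finrank (H := H) (by rw [hr, hfin])
    obtain ⟨Pgen, P, hPgen, hP⟩ := (h𝒮.map_isometryEquiv φ'.symm).exists_isAvsp hc hr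
      (e := e) (by omega) (by omega)
    exact ⟨H, _, Pgen, P, hr, (quadNondeg_hyperbolicExt_iff _).1 (hQ'.of_isometryEquiv φ'.symm),
      by omega, hPgen, hP⟩
end
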